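/- Let H_R, H_Q, H_E be finite-dimensional complex Hilbert spaces and let ρ_RQE be a state on H_R⊗H_Q⊗H_E. The following are equivalent: (a) for all finite-dimensional Hilbert spaces H_{Q'}, H_{E'} and every isometry V : H_Q⊗H_E → H_{Q'}⊗H_{E'}, setting σ_{RQ'E'} = (1_R⊗V) ρ_RQE (1_R⊗V)†, one has I(R;Q)_ρ ≥ I(R;Q')_σ; (b) I(R;E|Q)_ρ = 0; (c) for all such isometries V there exists a CPTP map 𝓔 : L(H_Q) → L(H_{Q'}) such that σ_{RQ'} = (id_R⊗𝓔)(ρ_RQ). -/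

import Mathlib

open Matrix Kronecker ComplexOrder

noncomputable section

/-- Von Neumann entropy `S(ρ) = -Tr[ρ log ρ]`, computed from the eigenvalues
(junk value `0` if `ρ` is not Hermitian). -/
def vnEntropy {n : Type*} [Fintype n] [DecidableEq n] (ρ : Matrix n n ℂ) : ℝ :=
  if h : ρ.IsHermitian then ∑ i, Real.negMulLog (h.eigenvalues i) else 0

/-- Partial trace over the first tensor factor. -/
def ptraceLeft {A B : Type*} [Fintype A] (M : Matrix (A × B) (A × B) ℂ) : Matrix B B ℂ :=
  Matrix.of fun x y => ∑ a, M (a, x) (a, y)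

/-- Partial trace over the second tensor factor. -/
def ptraceRight {A B : Type*} [Fintype B] (M : Matrix (A × B) (A × B) ℂ) : Matrix A A ℂ :=
  Matrix.of fun x y => ∑ b, M (x, b) (y, b)

/-- Partial trace over the last factor of a tripartite operator on `R ⊗ Q ⊗ E`. -/
def ptrace3E {R Q E : Type*} [Fintype E] (M : Matrix (R × Q × E) (R × Q × E) ℂ) :
    Matrix (R × Q) (R × Q) ℂ :=
  Matrix.of fun x y => ∑ e, M (x.1, x.2, e) (y.1, y.2, e)

/-- A state is a positive semidefinite operator with unit trace. -/
def IsState {n : Type*} [Fintype n] (ρ : Matrix n n ℂ) : Prop :=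
  ρ.PosSemidef ∧ ρ.trace = 1

/-- Quantum mutual information `I(A;B) = S(ρ_A) + S(ρ_B) - S(ρ_AB)`. -/
def mutualInfo {A B : Type*} [Fintype A] [DecidableEq A] [Fintype B] [DecidableEq B]
    (ρ : Matrix (A × B) (A × B) ℂ) : ℝ :=
  vnEntropy (ptraceRight ρ) + vnEntropy (ptraceLeft ρ) - vnEntropy ρ

/-- Conditional quantum mutual information
`I(R;E|Q) = S(ρ_RQ) + S(ρ_QE) - S(ρ_RQE) - S(ρ_Q)`. -/
def condMutualInfo {R Q E : Type*} [Fintype R] [DecidableEq R] [Fintype Q] [DecidableEq Q]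
    [Fintype E] [DecidableEq E] (ρ : Matrix (R × Q × E) (R × Q × E) ℂ) : ℝ :=
  vnEntropy (ptrace3E ρ) + vnEntropy (ptraceLeft ρ) - vnEntropy ρ
    - vnEntropy (ptraceLeft (ptrace3E ρ))

/-- The map `id_n ⊗ Φ` obtained by applying `Φ` blockwise. -/
def idTensor {A B : Type*} (n : Type*) (Φ : Matrix A A ℂ →ₗ[ℂ] Matrix B B ℂ)
    (M : Matrix (n × A) (n × A) ℂ) : Matrix (n × B) (n × B) ℂ :=
  Matrix.of fun x y => Φ (Matrix.of fun a b => M (x.1, a) (y.1, b)) x.2 y.2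

/-- Complete positivity: for every `k`, `id_{Fin k} ⊗ Φ` preserves positive semidefiniteness. -/
def IsCPMap {A B : Type*} [Fintype A] [Fintype B]
    (Φ : Matrix A A ℂ →ₗ[ℂ] Matrix B B ℂ) : Prop :=
  ∀ (k : ℕ) (M : Matrix (Fin k × A) (Fin k × A) ℂ), M.PosSemidef →
    (idTensor (Fin k) Φ M).PosSemidef

/-- A CPTP map (quantum channel). -/
def IsCPTP {A B : Type*} [Fintype A] [Fintype B]
    (Φ : Matrix A A ℂ →ₗ[ℂ] Matrix B B ℂ) : Prop :=
  IsCPMap Φ ∧ ∀ M : Matrix A A ℂ, (Φ M).trace = M.trace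

/-- The family of states on `Q ⊗ E` steered from `R` by measurements on a tripartite state. -/
def steered {R Q E : Type*} [Fintype R] [Fintype Q] [DecidableEq Q] [Fintype E] [DecidableEq E]
    (ρ : Matrix (R × Q × E) (R × Q × E) ℂ) : Set (Matrix (Q × E) (Q × E) ℂ) :=
  { ω | ∃ P : Matrix R R ℂ, P.PosSemidef ∧
      (ptraceLeft ((P ⊗ₖ (1 : Matrix (Q × E) (Q × E) ℂ)) * ρ)).trace ≠ 0 ∧
      ω = ((ptraceLeft ((P ⊗ₖ (1 : Matrix (Q × E) (Q × E) ℂ)) * ρ)).trace)⁻¹ •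
            ptraceLeft ((P ⊗ₖ (1 : Matrix (Q × E) (Q × E) ℂ)) * ρ) }

/-- A post-selected family of bipartite system-environment states: the normalized
output state space of some completely positive map `𝒫 : Q₀E₀ → QE`. -/
def IsPostSelected {Q E : Type*} [Fintype Q] [Fintype E]
    (S : Set (Matrix (Q × E) (Q × E) ℂ)) : Prop :=
  ∃ (n0 m0 : ℕ)
    (P : Matrix (Fin n0 × Fin m0) (Fin n0 × Fin m0) ℂ →ₗ[ℂ] Matrix (Q × E) (Q × E) ℂ),
    IsCPMap P ∧
    S = { ω | ∃ ρ0, IsState ρ0 ∧ (P ρ0).trace ≠ 0 ∧ ω = ((P ρ0).trace)⁻¹ • P ρ0 }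

/-!
Up to the subtraction of `Tr ρ / (1 + t)`, the relative entropy `D(ρ‖σ)` is the integral over
`t > 0` of the maximum over `X` of the quadratic form `2 Re Tr(Xρ) - Tr(XᴴσX) - t Tr(XρXᴴ)`, which
is attained at a resolvent `X_t` of the relative modular operator. If a Schwarz map `Ψ` is the trace
adjoint of `Φ`, then the form of `ρ, σ` at `Ψ(X)` dominates the form of `Φ ρ, Φ σ` at `X`, so `D`
cannot increase under `Φ`. If it stays constant, `Ψ(X'_t)` is a maximiser for almost every `t`,
where `X'_t` is the resolvent of `Φ ρ, Φ σ`, and then `Ψ(X'_t) ρ = X_t ρ`; integrating this against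
`t^(-1/2)` shows that the Petz map recovers `ρ` from `Φ ρ`.

As `I(R;Q) = S(R) + D(ρ_RQ ‖ 1 ⊗ ρ_Q)` and `I(R;E|Q) = I(R;QE) - I(R;Q)`, condition (b) is equality
in data processing for the partial trace over `E`. Under (b) the Petz map, which acts on `Q` alone,
rebuilds the whole state, and every reduced dynamics factors through it; conversely (a), applied to
an isometry that turns `E` into a part of the system, gives back (b).
-/

section PosSemidef

open scoped MatrixOrder Matrix.Norms.L2Operator

variable {𝕜 m n : Type*} [RCLike 𝕜] [Fintype n]

theorem mul_eq_zero_of_trace_mul_mul_conjTranspose_eq_zero [Fintype m] {A : Matrix n n 𝕜}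
    (hA : A.PosSemidef) {X : Matrix m n 𝕜} (h : (X * A * Xᴴ).trace = 0) : X * A = 0 := by
  classical
  obtain ⟨K, rfl⟩ := CStarAlgebra.nonneg_iff_eq_star_mul_self.mp (nonneg_iff_posSemidef.mpr hA)
  have hK : (X * Kᴴ * (X * Kᴴ)ᴴ).trace = 0 := by
    simpa only [conjTranspose_mul, conjTranspose_conjTranspose, star_eq_conjTranspose,
      Matrix.mul_assoc] using h
  rw [star_eq_conjTranspose, ← Matrix.mul_assoc,
    trace_mul_conjTranspose_self_eq_zero_iff.mp hK, Matrix.zero_mul]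

theorem mul_eq_zero_of_trace_mul_eq_zero {A B : Matrix n n 𝕜} (hA : A.PosSemidef)
    (hB : B.PosSemidef) (h : (A * B).trace = 0) : A * B = 0 := by
  classical
  obtain ⟨K, rfl⟩ := CStarAlgebra.nonneg_iff_eq_star_mul_self.mp (nonneg_iff_posSemidef.mpr hA)
  have hK : (K * B * Kᴴ).trace = 0 := by rwa [trace_mul_cycle]
  rw [Matrix.mul_assoc, mul_eq_zero_of_trace_mul_mul_conjTranspose_eq_zero hB hK, Matrix.mul_zero]

theorem trace_mul_nonneg_of_posSemidef {A B : Matrix n n 𝕜} (hA : A.PosSemidef)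
    (hB : B.PosSemidef) : 0 ≤ (A * B).trace := by
  classical
  obtain ⟨K, rfl⟩ := CStarAlgebra.nonneg_iff_eq_star_mul_self.mp (nonneg_iff_posSemidef.mpr hA)
  rw [star_eq_conjTranspose, ← trace_mul_cycle]
  exact (hB.mul_mul_conjTranspose_same K).trace_nonneg

theorem posSemidef_of_forall_trace_mul_nonneg {A : Matrix n n ℂ}
    (h : ∀ X : Matrix n n ℂ, X.PosSemidef → 0 ≤ (X * A).trace) : A.PosSemidef := by
  classical
  rw [← isPositive_toEuclideanLin_iff, LinearMap.isPositive_iff_complex]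
  intro v
  have hv : 0 ≤ inner ℂ (A.toEuclideanLin v) v := by
    rw [← star_nonneg_iff]
    have := h _ (posSemidef_vecMulVec_self_star v.ofLp)
    rwa [vecMulVec_mul, trace_vecMulVec, dotProduct_comm, ← dotProduct_mulVec, star_dotProduct,
      dotProduct_comm] at this
  exact ⟨RCLike.conj_eq_iff_re.mp (RCLike.conj_eq_iff_im.mpr (RCLike.nonneg_iff.mp hv).2),
    (RCLike.nonneg_iff.mp hv).1⟩

end PosSemidef

section SpectralCalculus

variable {𝕜 n : Type*} [RCLike 𝕜] [Fintype n] [DecidableEq n]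

theorem continuousOn_spectrum (A : Matrix n n 𝕜) (f : ℝ → ℝ) : ContinuousOn f (spectrum ℝ A) :=
  A.finite_real_spectrum.continuousOn f

theorem cfc_mul_cfc (A : Matrix n n 𝕜) (f g : ℝ → ℝ) :
    cfc f A * cfc g A = cfc (fun x => f x * g x) A :=
  (cfc_mul f g A (continuousOn_spectrum A f) (continuousOn_spectrum A g)).symm

theorem mul_cfc {A : Matrix n n 𝕜} (hA : A.IsHermitian) (f : ℝ → ℝ) :
    A * cfc f A = cfc (fun x => x * f x) A :=
  (congrArg (· * cfc f A) (cfc_id' ℝ A hA.isSelfAdjoint)).symm.trans (cfc_mul_cfc A (fun x => x) f)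

theorem cfc_mul_self {A : Matrix n n 𝕜} (hA : A.IsHermitian) (f : ℝ → ℝ) :
    cfc f A * A = cfc (fun x => f x * x) A :=
  (congrArg (cfc f A * ·) (cfc_id' ℝ A hA.isSelfAdjoint)).symm.trans (cfc_mul_cfc A f (fun x => x))

theorem isHermitian_cfc (f : ℝ → ℝ) (A : Matrix n n 𝕜) : (cfc f A).IsHermitian :=
  cfc_predicate f A

/-- The spectral projection of a Hermitian matrix onto its eigenspace for the eigenvalue `x`. -/
def spectralProj (A : Matrix n n 𝕜) (x : ℝ) : Matrix n n 𝕜 :=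
  cfc (Pi.single x 1 : ℝ → ℝ) A

/-- The real spectrum of a matrix as a finite set. -/
def spectrumFinset (A : Matrix n n 𝕜) : Finset ℝ :=
  A.finite_real_spectrum.toFinset

theorem cfc_mul_spectralProj (A : Matrix n n 𝕜) (f : ℝ → ℝ) (x : ℝ) :
    cfc f A * spectralProj A x = f x • spectralProj A x := by
  rw [spectralProj, cfc_mul_cfc, ← cfc_smul _ _ _ (continuousOn_spectrum A _)]
  congr 1
  ext y
  by_cases h : y = x <;> simp [h]

theorem spectralProj_mul_cfc (A : Matrix n n 𝕜) (f : ℝ → ℝ) (x : ℝ) :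
    spectralProj A x * cfc f A = f x • spectralProj A x := by
  rw [spectralProj, cfc_commute_cfc, ← spectralProj, cfc_mul_spectralProj]

theorem self_mul_spectralProj {A : Matrix n n 𝕜} (hA : A.IsHermitian) (x : ℝ) :
    A * spectralProj A x = x • spectralProj A x :=
  (congrArg (· * spectralProj A x) (cfc_id' ℝ A hA.isSelfAdjoint)).symm.trans
    (cfc_mul_spectralProj A (fun x => x) x)

theorem cfc_eq_sum_spectralProj (A : Matrix n n 𝕜) (f : ℝ → ℝ) :
    cfc f A = ∑ x ∈ spectrumFinset A, f x • spectralProj A x := by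
  simp only [spectralProj, ← cfc_smul _ _ A (continuousOn_spectrum A _)]
  rw [← cfc_sum _ _ _ fun _ _ => continuousOn_spectrum A _]
  refine cfc_congr fun x hx => ?_
  have hx : x ∈ spectrumFinset A := A.finite_real_spectrum.mem_toFinset.mpr hx
  simp [Finset.sum_apply, Pi.single_apply, hx]

theorem sum_spectralProj {A : Matrix n n 𝕜} (hA : A.IsHermitian) :
    ∑ x ∈ spectrumFinset A, spectralProj A x = 1 := by
  simpa using (cfc_eq_sum_spectralProj A 1).symm.trans (cfc_one ℝ A hA)

end SpectralCalculus

section Support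

variable {𝕜 n : Type*} [RCLike 𝕜] [Fintype n] [DecidableEq n]

/-- The projection onto the support of a Hermitian matrix; the function `x ↦ x * x⁻¹` is `0` at
`0` and `1` elsewhere because `0⁻¹ = 0`. -/
def supportProj (A : Matrix n n 𝕜) : Matrix n n 𝕜 :=
  cfc (fun x : ℝ => x * x⁻¹) A

/-- The inverse square root of a positive semidefinite matrix on its support; it vanishes on the
kernel because `0⁻¹ = 0`. -/
def invSqrt (A : Matrix n n 𝕜) : Matrix n n 𝕜 :=
  cfc (fun x : ℝ => (√x)⁻¹) A

/-- The support (range) of `A` is contained in the support of `B`. -/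
def SupportLE (A B : Matrix n n 𝕜) : Prop :=
  supportProj B * A = A

theorem nonneg_of_mem_spectrum {A : Matrix n n 𝕜} (hA : A.PosSemidef) {x : ℝ}
    (hx : x ∈ spectrum ℝ A) : 0 ≤ x :=
  RCLike.ofReal_nonneg.mp ((posSemidef_iff_isHermitian_and_spectrum_nonneg.mp hA).2 hx)

theorem cfc_congr_of_posSemidef {A : Matrix n n 𝕜} (hA : A.PosSemidef) {f g : ℝ → ℝ}
    (h : ∀ x, 0 ≤ x → f x = g x) : cfc f A = cfc g A :=
  cfc_congr fun x hx => h x (nonneg_of_mem_spectrum hA hx)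

theorem isHermitian_supportProj (A : Matrix n n 𝕜) : (supportProj A).IsHermitian :=
  isHermitian_cfc _ A

theorem supportProj_mul_self {A : Matrix n n 𝕜} (hA : A.IsHermitian) : supportProj A * A = A := by
  simpa only [supportProj, cfc_mul_self hA, mul_inv_mul_cancel] using
    cfc_id' ℝ A hA.isSelfAdjoint

theorem supportProj_mul_supportProj (A : Matrix n n 𝕜) :
    supportProj A * supportProj A = supportProj A := by
  rw [supportProj, cfc_mul_cfc]
  congr 1
  ext x
  grind

theorem sqrt_mul_sqrt {A : Matrix n n 𝕜} (hA : A.PosSemidef) :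
    cfc Real.sqrt A * cfc Real.sqrt A = A := by
  rw [cfc_mul_cfc, cfc_congr_of_posSemidef hA fun x hx => Real.mul_self_sqrt hx]
  exact cfc_id' ℝ A hA.isHermitian.isSelfAdjoint

theorem sqrt_mul_invSqrt {A : Matrix n n 𝕜} (hA : A.PosSemidef) :
    cfc Real.sqrt A * invSqrt A = supportProj A := by
  rw [invSqrt, cfc_mul_cfc]
  refine cfc_congr_of_posSemidef hA fun x hx => ?_
  obtain rfl | hx := hx.eq_or_lt
  · simp
  · rw [mul_inv_cancel₀ hx.ne', mul_inv_cancel₀ (Real.sqrt_ne_zero'.mpr hx)]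

theorem self_mul_invSqrt {A : Matrix n n 𝕜} (hA : A.PosSemidef) :
    A * invSqrt A = cfc Real.sqrt A := by
  rw [invSqrt, mul_cfc hA.isHermitian]
  exact cfc_congr_of_posSemidef hA fun x _ => Real.div_sqrt

theorem invSqrt_mul_self_mul_invSqrt {A : Matrix n n 𝕜} (hA : A.PosSemidef) :
    invSqrt A * A * invSqrt A = supportProj A := by
  rw [Matrix.mul_assoc, self_mul_invSqrt hA, invSqrt, cfc_commute_cfc, ← invSqrt,
    sqrt_mul_invSqrt hA]

theorem supportProj_mul_sqrt {A : Matrix n n 𝕜} (hA : A.PosSemidef) :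
    supportProj A * cfc Real.sqrt A = cfc Real.sqrt A := by
  rw [← self_mul_invSqrt hA, ← Matrix.mul_assoc, supportProj_mul_self hA.isHermitian]

theorem SupportLE.mul_sqrt {A B : Matrix n n 𝕜} (hA : A.PosSemidef) (h : SupportLE A B) :
    supportProj B * cfc Real.sqrt A = cfc Real.sqrt A := by
  rw [← self_mul_invSqrt hA, ← Matrix.mul_assoc, h]

theorem isHermitian_one_sub_supportProj (A : Matrix n n 𝕜) : (1 - supportProj A).IsHermitian :=
  isHermitian_one.sub (isHermitian_supportProj A)

theorem one_sub_supportProj_mul_self {A : Matrix n n 𝕜} (hA : A.IsHermitian) :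
    (1 - supportProj A) * A = 0 := by
  rw [Matrix.sub_mul, Matrix.one_mul, supportProj_mul_self hA, sub_self]

theorem one_sub_supportProj_mul_one_sub_supportProj (A : Matrix n n 𝕜) :
    (1 - supportProj A) * (1 - supportProj A) = 1 - supportProj A := by
  rw [Matrix.sub_mul, Matrix.one_mul, Matrix.mul_sub, Matrix.mul_one, supportProj_mul_supportProj,
    sub_self, sub_zero]

theorem posSemidef_one_sub_supportProj (A : Matrix n n 𝕜) : (1 - supportProj A).PosSemidef := by
  have h := posSemidef_conjTranspose_mul_self (1 - supportProj A)
  rwa [(isHermitian_one_sub_supportProj A).eq,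
    one_sub_supportProj_mul_one_sub_supportProj] at h

theorem SupportLE.mul_eq_zero {A B X : Matrix n n 𝕜} (hB : B.IsHermitian) (h : SupportLE A B)
    (hX : X * B = 0) : X * A = 0 := by
  rw [← h, supportProj, ← mul_cfc hB, ← Matrix.mul_assoc, ← Matrix.mul_assoc, hX,
    Matrix.zero_mul, Matrix.zero_mul]

end Support

section DoubleOperatorIntegral

variable {𝕜 m n : Type*} [RCLike 𝕜] [Fintype m] [DecidableEq m] [Fintype n] [DecidableEq n]

/-- The double operator integral `∑ g(x, y) P_x M Q_y` over the spectral projections `P_x` of `A`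
and `Q_y` of `B`: the function `g` of left multiplication by `A` and right multiplication by `B`,
applied to `M`. -/
def doubleOpInt (g : ℝ → ℝ → ℝ) (A : Matrix m m 𝕜) (B : Matrix n n 𝕜) (M : Matrix m n 𝕜) :
    Matrix m n 𝕜 :=
  ∑ x ∈ spectrumFinset A, ∑ y ∈ spectrumFinset B,
    g x y • (spectralProj A x * M * spectralProj B y)

theorem cfc_mul_doubleOpInt (f : ℝ → ℝ) (g : ℝ → ℝ → ℝ) (A : Matrix m m 𝕜) (B : Matrix n n 𝕜)
    (M : Matrix m n 𝕜) :
    cfc f A * doubleOpInt g A B M = doubleOpInt (fun x y => f x * g x y) A B M := by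
  simp only [doubleOpInt, Matrix.mul_sum, Matrix.mul_smul, ← Matrix.mul_assoc,
    cfc_mul_spectralProj, Matrix.smul_mul, smul_smul, mul_comm]

theorem doubleOpInt_mul_cfc (f : ℝ → ℝ) (g : ℝ → ℝ → ℝ) (A : Matrix m m 𝕜) (B : Matrix n n 𝕜)
    (M : Matrix m n 𝕜) :
    doubleOpInt g A B M * cfc f B = doubleOpInt (fun x y => g x y * f y) A B M := by
  simp only [doubleOpInt, Matrix.sum_mul, Matrix.mul_smul, Matrix.mul_assoc,
    spectralProj_mul_cfc, Matrix.smul_mul, smul_smul]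

theorem self_mul_doubleOpInt {A : Matrix m m 𝕜} (hA : A.IsHermitian) (g : ℝ → ℝ → ℝ)
    (B : Matrix n n 𝕜) (M : Matrix m n 𝕜) :
    A * doubleOpInt g A B M = doubleOpInt (fun x y => x * g x y) A B M :=
  (congrArg (· * doubleOpInt g A B M) (cfc_id' ℝ A hA.isSelfAdjoint)).symm.trans
    (cfc_mul_doubleOpInt (fun x => x) g A B M)

theorem doubleOpInt_mul_self {B : Matrix n n 𝕜} (hB : B.IsHermitian) (g : ℝ → ℝ → ℝ)
    (A : Matrix m m 𝕜) (M : Matrix m n 𝕜) :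
    doubleOpInt g A B M * B = doubleOpInt (fun x y => g x y * y) A B M :=
  (congrArg (doubleOpInt g A B M * ·) (cfc_id' ℝ B hB.isSelfAdjoint)).symm.trans
    (doubleOpInt_mul_cfc (fun y => y) g A B M)

theorem doubleOpInt_const {A : Matrix m m 𝕜} {B : Matrix n n 𝕜} (hA : A.IsHermitian)
    (hB : B.IsHermitian) (c : ℝ) (M : Matrix m n 𝕜) : doubleOpInt (fun _ _ => c) A B M = c • M := by
  simp only [doubleOpInt, ← Finset.smul_sum, ← Matrix.mul_sum, ← Matrix.sum_mul,
    sum_spectralProj hA, sum_spectralProj hB, Matrix.one_mul, Matrix.mul_one]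

theorem doubleOpInt_left {A : Matrix m m 𝕜} {B : Matrix n n 𝕜} (hA : A.IsHermitian)
    (hB : B.IsHermitian) (f : ℝ → ℝ) (M : Matrix m n 𝕜) :
    doubleOpInt (fun x _ => f x) A B M = cfc f A * M := by
  simpa only [cfc_mul_doubleOpInt, mul_one, one_smul] using
    congrArg (cfc f A * ·) (doubleOpInt_const hA hB 1 M)

theorem doubleOpInt_right {A : Matrix m m 𝕜} {B : Matrix n n 𝕜} (hA : A.IsHermitian)
    (hB : B.IsHermitian) (g : ℝ → ℝ) (M : Matrix m n 𝕜) :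
    doubleOpInt (fun _ y => g y) A B M = M * cfc g B := by
  simpa only [doubleOpInt_mul_cfc, one_mul, one_smul] using
    congrArg (· * cfc g B) (doubleOpInt_const hA hB 1 M)

theorem doubleOpInt_add (g h : ℝ → ℝ → ℝ) (A : Matrix m m 𝕜) (B : Matrix n n 𝕜)
    (M : Matrix m n 𝕜) :
    doubleOpInt (fun x y => g x y + h x y) A B M = doubleOpInt g A B M + doubleOpInt h A B M := by
  simp only [doubleOpInt, add_smul, Finset.sum_add_distrib]

theorem doubleOpInt_sub (g h : ℝ → ℝ → ℝ) (A : Matrix m m 𝕜) (B : Matrix n n 𝕜)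
    (M : Matrix m n 𝕜) :
    doubleOpInt (fun x y => g x y - h x y) A B M = doubleOpInt g A B M - doubleOpInt h A B M := by
  simp only [doubleOpInt, sub_smul, Finset.sum_sub_distrib]

theorem doubleOpInt_smul (c : ℝ) (g : ℝ → ℝ → ℝ) (A : Matrix m m 𝕜) (B : Matrix n n 𝕜)
    (M : Matrix m n 𝕜) :
    doubleOpInt (fun x y => c * g x y) A B M = c • doubleOpInt g A B M := by
  simp only [doubleOpInt, mul_smul, Finset.smul_sum]

theorem spectralProj_mul_mul_spectralProj_eq_zero_or {A B : Matrix n n 𝕜} (hA : A.PosSemidef)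
    (hB : B.PosSemidef) (h : SupportLE A B) {x y : ℝ} (hx : x ∈ spectrumFinset B)
    (hy : y ∈ spectrumFinset A) :
    spectralProj B x * A * spectralProj A y = 0 ∨ 0 < x ∧ 0 < y := by
  have hx := nonneg_of_mem_spectrum hB (B.finite_real_spectrum.mem_toFinset.mp hx)
  have hy := nonneg_of_mem_spectrum hA (A.finite_real_spectrum.mem_toFinset.mp hy)
  obtain rfl | hx := hx.eq_or_lt
  · left
    rw [← h, supportProj, ← Matrix.mul_assoc, spectralProj_mul_cfc, zero_mul, zero_smul,
      Matrix.zero_mul, Matrix.zero_mul]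
  obtain rfl | hy := hy.eq_or_lt
  · left
    rw [Matrix.mul_assoc, self_mul_spectralProj hA.isHermitian, zero_smul, Matrix.mul_zero]
  exact .inr ⟨hx, hy⟩

theorem doubleOpInt_congr {A B : Matrix n n 𝕜} (hA : A.PosSemidef) (hB : B.PosSemidef)
    (h : SupportLE A B) {g g' : ℝ → ℝ → ℝ} (hg : ∀ x y, 0 < x → 0 < y → g x y = g' x y) :
    doubleOpInt g B A A = doubleOpInt g' B A A := by
  refine Finset.sum_congr rfl fun x hx => Finset.sum_congr rfl fun y hy => ?_
  obtain h0 | ⟨hx, hy⟩ := spectralProj_mul_mul_spectralProj_eq_zero_or hA hB h hx hy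
  · rw [h0, smul_zero, smul_zero]
  · rw [hg x y hx hy]

open scoped Matrix.Norms.L2Operator

theorem integrable_smul_spectralProj_mul_mul {α : Type*} [MeasurableSpace α]
    {μ : MeasureTheory.Measure α} {A B : Matrix n n ℂ} (hA : A.PosSemidef) (hB : B.PosSemidef)
    (h : SupportLE A B) {g : α → ℝ → ℝ → ℝ}
    (hg : ∀ x y, 0 < x → 0 < y → MeasureTheory.Integrable (fun t => g t x y) μ)
    {x y : ℝ} (hx : x ∈ spectrumFinset B) (hy : y ∈ spectrumFinset A) :
    MeasureTheory.Integrable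
      (fun t => g t x y • (spectralProj B x * A * spectralProj A y)) μ := by
  obtain h0 | ⟨hx, hy⟩ := spectralProj_mul_mul_spectralProj_eq_zero_or hA hB h hx hy
  · simp [h0]
  · exact (hg x y hx hy).smul_const _

theorem integrable_doubleOpInt {α : Type*} [MeasurableSpace α]
    {μ : MeasureTheory.Measure α} {A B : Matrix n n ℂ} (hA : A.PosSemidef) (hB : B.PosSemidef)
    (h : SupportLE A B) {g : α → ℝ → ℝ → ℝ}
    (hg : ∀ x y, 0 < x → 0 < y → MeasureTheory.Integrable (fun t => g t x y) μ) :
    MeasureTheory.Integrable (fun t => doubleOpInt (g t) B A A) μ :=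
  MeasureTheory.integrable_finsetSum _ fun _ hx => MeasureTheory.integrable_finsetSum _
    fun _ hy => integrable_smul_spectralProj_mul_mul hA hB h hg hx hy

theorem integral_doubleOpInt {α : Type*} [MeasurableSpace α]
    {μ : MeasureTheory.Measure α} {A B : Matrix n n ℂ} (hA : A.PosSemidef) (hB : B.PosSemidef)
    (h : SupportLE A B) {g : α → ℝ → ℝ → ℝ}
    (hg : ∀ x y, 0 < x → 0 < y → MeasureTheory.Integrable (fun t => g t x y) μ) :
    ∫ t, doubleOpInt (g t) B A A ∂μ = doubleOpInt (fun x y => ∫ t, g t x y ∂μ) B A A := by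
  have hint {x y : ℝ} := integrable_smul_spectralProj_mul_mul (x := x) (y := y) hA hB h hg
  simp only [doubleOpInt]
  rw [MeasureTheory.integral_finsetSum _ fun x hx =>
    MeasureTheory.integrable_finsetSum _ fun y hy => hint hx hy]
  refine Finset.sum_congr rfl fun x hx => ?_
  rw [MeasureTheory.integral_finsetSum _ fun y hy => hint hx hy]
  exact Finset.sum_congr rfl fun y _ => integral_smul_const _ _

end DoubleOperatorIntegral

section ScalarIntegrals

open MeasureTheory Set Filter Topology

theorem hasDerivAt_log_add_mul_sub_log {x y t : ℝ} (hx : 0 < x) (hy : 0 < y) (ht : 0 ≤ t) :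
    HasDerivAt (fun t => Real.log (x + t * y) - Real.log (1 + t))
      ((x + t * y)⁻¹ * y - (1 + t)⁻¹) t := by
  have h1 : HasDerivAt (fun t => x + t * y) y t := by
    simpa using ((hasDerivAt_id t).mul_const y).const_add x
  have h2 : HasDerivAt (fun t => 1 + t) 1 t := (hasDerivAt_id t).const_add 1
  have h := (h1.log (by positivity)).sub (h2.log (by positivity))
  rwa [div_eq_inv_mul, div_eq_inv_mul, mul_one] at h

theorem tendsto_log_add_mul_sub_log (x : ℝ) {y : ℝ} (hy : 0 < y) :
    Tendsto (fun t => Real.log (x + t * y) - Real.log (1 + t)) atTop (𝓝 (Real.log y)) := by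
  have hlim (a b : ℝ) : Tendsto (fun t : ℝ => a / t + b) atTop (𝓝 b) := by
    simpa using (tendsto_id.const_div_atTop a).add_const b
  have h := ((hlim x y).log hy.ne').sub ((hlim 1 1).log one_ne_zero)
  rw [Real.log_one, sub_zero] at h
  refine h.congr' ?_
  filter_upwards [eventually_gt_atTop 0, (hlim x y).eventually_ne hy.ne'] with t ht hne
  have hxy : x + t * y = t * (x / t + y) := by field_simp
  have h1 : 1 + t = t * (1 / t + 1) := by field_simp
  rw [hxy, h1, Real.log_mul ht.ne' hne, Real.log_mul ht.ne' (by positivity),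
    add_sub_add_left_eq_sub]

-- The integrand is `(y - x) / ((x + t y) (1 + t))`, hence of constant sign.
theorem integrableOn_and_integral_inv_add_mul_sub {x y : ℝ} (hx : 0 < x) (hy : 0 < y) :
    IntegrableOn (fun t => (x + t * y)⁻¹ * y - (1 + t)⁻¹) (Ioi 0) ∧
      ∫ t in Ioi 0, ((x + t * y)⁻¹ * y - (1 + t)⁻¹) = Real.log y - Real.log x := by
  have hderiv (t : ℝ) (ht : t ∈ Ici 0) := hasDerivAt_log_add_mul_sub_log hx hy ht
  have hlim := tendsto_log_add_mul_sub_log x hy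
  have heq (t : ℝ) (ht : t ∈ Ioi 0) :
      (x + t * y)⁻¹ * y - (1 + t)⁻¹ = (y - x) / ((x + t * y) * (1 + t)) := by
    have ht : 0 < t := ht
    field_simp
    ring
  have hden (t : ℝ) (ht : t ∈ Ioi 0) : 0 ≤ (x + t * y) * (1 + t) := by
    have ht : 0 < t := ht
    positivity
  rw [show Real.log x = Real.log (x + 0 * y) - Real.log (1 + 0) by simp]
  obtain hxy | hxy := le_total x y
  · have hsign (t : ℝ) (ht : t ∈ Ioi 0) : 0 ≤ (x + t * y)⁻¹ * y - (1 + t)⁻¹ :=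
      heq t ht ▸ div_nonneg (sub_nonneg.mpr hxy) (hden t ht)
    exact ⟨integrableOn_Ioi_deriv_of_nonneg' hderiv hsign hlim,
      integral_Ioi_of_hasDerivAt_of_nonneg' hderiv hsign hlim⟩
  · have hsign (t : ℝ) (ht : t ∈ Ioi 0) : (x + t * y)⁻¹ * y - (1 + t)⁻¹ ≤ 0 :=
      heq t ht ▸ div_nonpos_of_nonpos_of_nonneg (sub_nonpos.mpr hxy) (hden t ht)
    exact ⟨integrableOn_Ioi_deriv_of_nonpos' hderiv hsign hlim,
      integral_Ioi_of_hasDerivAt_of_nonpos' hderiv hsign hlim⟩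

theorem integrableOn_and_integral_rpow_mul_inv_add_mul {x y : ℝ} (hx : 0 < x) (hy : 0 < y) :
    IntegrableOn (fun t => t ^ (-1 / 2 : ℝ) * (x + t * y)⁻¹) (Ioi 0) ∧
      ∫ t in Ioi 0, t ^ (-1 / 2 : ℝ) * (x + t * y)⁻¹ =
        (∫ t in Ioi 0, Real.rpowIntegrand₀₁ (1 / 2) t 1) * ((√x)⁻¹ * (√y)⁻¹) := by
  have hhalf : (1 / 2 : ℝ) ∈ Ioo (0 : ℝ) 1 := by norm_num
  have hxy : 0 ≤ x / y := by positivity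
  have heq : EqOn (fun t => x⁻¹ * Real.rpowIntegrand₀₁ (1 / 2) t (x / y))
      (fun t => t ^ (-1 / 2 : ℝ) * (x + t * y)⁻¹) (Ioi 0) := by
    intro t (ht : 0 < t)
    dsimp only
    rw [Real.rpowIntegrand₀₁_eq_pow_div hhalf ht.le hxy, show (1 / 2 - 1 : ℝ) = -1 / 2 by norm_num]
    field_simp
    ring
  refine ⟨(integrableOn_congr_fun heq measurableSet_Ioi).mp
    ((Real.integrableOn_rpowIntegrand₀₁_Ioi hhalf hxy).const_mul _), ?_⟩
  rw [← setIntegral_congr_fun measurableSet_Ioi heq, integral_const_mul,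
    Real.integral_rpowIntegrand₀₁_eq_rpow_mul_const hhalf hxy, ← Real.sqrt_eq_rpow,
    Real.sqrt_div hx.le]
  have hsx : x⁻¹ * √x = (√x)⁻¹ := by rw [inv_mul_eq_div, Real.sqrt_div_self]
  linear_combination (√y)⁻¹ * (∫ t in Ioi 0, Real.rpowIntegrand₀₁ (1 / 2) t 1) * hsx

end ScalarIntegrals

section RelativeResolvent

theorem re_trace_conjTranspose {n : Type*} [Fintype n] (M : Matrix n n ℂ) :
    Mᴴ.trace.re = M.trace.re := by
  rw [trace_conjTranspose, Complex.star_def, Complex.conj_re]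

/-- The quadratic form whose maximum over `X` is attained at the relative resolvent. -/
def resolventForm {n : Type*} [Fintype n] (ρ σ : Matrix n n ℂ) (t : ℝ) (X : Matrix n n ℂ) : ℝ :=
  2 * (X * ρ).trace.re - (Xᴴ * σ * X).trace.re - t * (X * ρ * Xᴴ).trace.re

theorem resolventForm_eq_sub_of_mul_add {n : Type*} [Fintype n] {ρ σ : Matrix n n ℂ}
    (hρ : ρ.IsHermitian) (hσ : σ.IsHermitian) {t : ℝ} {X₀ : Matrix n n ℂ}
    (hX₀ : σ * X₀ + t • (X₀ * ρ) = ρ) (X : Matrix n n ℂ) :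
    resolventForm ρ σ t X = (X₀ * ρ).trace.re - ((X - X₀)ᴴ * σ * (X - X₀)).trace.re
      - t * ((X - X₀) * ρ * (X - X₀)ᴴ).trace.re := by
  have hlin (Y : Matrix n n ℂ) :
      (Y * ρ).trace.re = (Yᴴ * σ * X₀).trace.re + t * (X₀ * ρ * Yᴴ).trace.re := by
    have h := congrArg (fun M => (Yᴴ * M).trace.re) hX₀
    simp only [Matrix.mul_add, trace_add, Complex.add_re, Matrix.mul_smul, trace_smul,
      Complex.smul_re, smul_eq_mul] at h
    rw [← re_trace_conjTranspose, conjTranspose_mul, hρ.eq, trace_mul_comm, ← h,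
      trace_mul_comm Yᴴ (X₀ * ρ), Matrix.mul_assoc Yᴴ]
  have hσ_symm : (X₀ᴴ * σ * X).trace.re = (Xᴴ * σ * X₀).trace.re := by
    simpa [hσ.eq, Matrix.mul_assoc] using re_trace_conjTranspose (Xᴴ * σ * X₀)
  have hρ_symm : (X * ρ * X₀ᴴ).trace.re = (X₀ * ρ * Xᴴ).trace.re := by
    simpa [hρ.eq, Matrix.mul_assoc] using re_trace_conjTranspose (X₀ * ρ * Xᴴ)
  simp only [resolventForm, conjTranspose_sub, Matrix.sub_mul, Matrix.mul_sub, trace_sub,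
    Complex.sub_re, hσ_symm, hρ_symm]
  linear_combination 2 * hlin X - hlin X₀

variable {n : Type*} [Fintype n] [DecidableEq n] {ρ σ : Matrix n n ℂ}

/-- The solution `X` of the Sylvester equation `σ X + t X ρ = ρ`, that is
`(Δ + t)⁻¹ 1` for the relative modular operator `Δ X = σ X ρ⁻¹`. -/
def relResolvent (ρ σ : Matrix n n ℂ) (t : ℝ) : Matrix n n ℂ :=
  doubleOpInt (fun x y => (x + t * y)⁻¹) σ ρ ρ

theorem mul_relResolvent_add (hρ : ρ.PosSemidef) (hσ : σ.PosSemidef) (h : SupportLE ρ σ)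
    {t : ℝ} (ht : 0 < t) :
    σ * relResolvent ρ σ t + t • (relResolvent ρ σ t * ρ) = ρ := by
  rw [relResolvent, self_mul_doubleOpInt hσ.isHermitian, doubleOpInt_mul_self hρ.isHermitian,
    ← doubleOpInt_smul, ← doubleOpInt_add]
  refine (doubleOpInt_congr hρ hσ h fun x y hx hy => ?_).trans
    ((doubleOpInt_const hσ.isHermitian hρ.isHermitian 1 ρ).trans (one_smul ℝ ρ))
  field_simp

theorem resolventForm_relResolvent (hρ : ρ.PosSemidef) (hσ : σ.PosSemidef) (h : SupportLE ρ σ)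
    {t : ℝ} (ht : 0 < t) :
    resolventForm ρ σ t (relResolvent ρ σ t) = (relResolvent ρ σ t * ρ).trace.re := by
  simp [resolventForm_eq_sub_of_mul_add hρ.isHermitian hσ.isHermitian
    (mul_relResolvent_add hρ hσ h ht)]

theorem resolventForm_le (hρ : ρ.PosSemidef) (hσ : σ.PosSemidef) (h : SupportLE ρ σ)
    {t : ℝ} (ht : 0 < t) (X : Matrix n n ℂ) :
    resolventForm ρ σ t X ≤ (relResolvent ρ σ t * ρ).trace.re := by
  rw [resolventForm_eq_sub_of_mul_add hρ.isHermitian hσ.isHermitian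
    (mul_relResolvent_add hρ hσ h ht)]
  set Y := X - relResolvent ρ σ t
  have hYσ := (Complex.nonneg_iff.mp (hσ.conjTranspose_mul_mul_same Y).trace_nonneg).1
  have hYρ := (Complex.nonneg_iff.mp (hρ.mul_mul_conjTranspose_same Y).trace_nonneg).1
  nlinarith

theorem mul_eq_relResolvent_mul_of_resolventForm_eq (hρ : ρ.PosSemidef) (hσ : σ.PosSemidef)
    (h : SupportLE ρ σ) {t : ℝ} (ht : 0 < t) {X : Matrix n n ℂ}
    (hX : resolventForm ρ σ t X = (relResolvent ρ σ t * ρ).trace.re) :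
    X * ρ = relResolvent ρ σ t * ρ := by
  rw [resolventForm_eq_sub_of_mul_add hρ.isHermitian hσ.isHermitian
    (mul_relResolvent_add hρ hσ h ht)] at hX
  rw [← sub_eq_zero, ← Matrix.sub_mul]
  set Y := X - relResolvent ρ σ t
  have hYσ := (Complex.nonneg_iff.mp (hσ.conjTranspose_mul_mul_same Y).trace_nonneg).1
  have hYρ := Complex.nonneg_iff.mp (hρ.mul_mul_conjTranspose_same Y).trace_nonneg
  refine mul_eq_zero_of_trace_mul_mul_conjTranspose_eq_zero hρ (Complex.ext ?_ hYρ.2.symm)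
  rw [Complex.zero_re]
  nlinarith [hYρ.1]

end RelativeResolvent

section RelativeEntropy

open MeasureTheory Set
open scoped Matrix.Norms.L2Operator

variable {n : Type*} [Fintype n] [DecidableEq n] {ρ σ : Matrix n n ℂ}

/-- Umegaki's relative entropy `Tr[ρ (log ρ - log σ)]`, meaningful when the support of `ρ` is
contained in that of `σ`; both logarithms vanish on the respective kernels because
`Real.log 0 = 0`. -/
def relEntropy (ρ σ : Matrix n n ℂ) : ℝ :=
  (ρ * (cfc Real.log ρ - cfc Real.log σ)).trace.re

theorem integrableOn_and_integral_relResolvent_mul_sub (hρ : ρ.PosSemidef) (hσ : σ.PosSemidef)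
    (h : SupportLE ρ σ) :
    IntegrableOn (fun t => relResolvent ρ σ t * ρ - (1 + t)⁻¹ • ρ) (Ioi 0) ∧
      ∫ t in Ioi 0, (relResolvent ρ σ t * ρ - (1 + t)⁻¹ • ρ) =
        ρ * cfc Real.log ρ - cfc Real.log σ * ρ := by
  have heq (t : ℝ) : relResolvent ρ σ t * ρ - (1 + t)⁻¹ • ρ =
      doubleOpInt (fun x y => (x + t * y)⁻¹ * y - (1 + t)⁻¹) σ ρ ρ := by
    rw [doubleOpInt_sub, doubleOpInt_const hσ.isHermitian hρ.isHermitian, relResolvent,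
      doubleOpInt_mul_self hρ.isHermitian]
  have hval : doubleOpInt (fun x y => Real.log y - Real.log x) σ ρ ρ =
      ρ * cfc Real.log ρ - cfc Real.log σ * ρ := by
    rw [doubleOpInt_sub, doubleOpInt_right hσ.isHermitian hρ.isHermitian,
      doubleOpInt_left hσ.isHermitian hρ.isHermitian]
  simp only [heq]
  have hint (x y : ℝ) (hx : 0 < x) (hy : 0 < y) := integrableOn_and_integral_inv_add_mul_sub hx hy
  refine ⟨integrable_doubleOpInt hρ hσ h fun x y hx hy => (hint x y hx hy).1, ?_⟩
  rw [integral_doubleOpInt hρ hσ h fun x y hx hy => (hint x y hx hy).1, ← hval]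
  exact doubleOpInt_congr hρ hσ h fun x y hx hy => (hint x y hx hy).2

theorem integrableOn_and_integral_rpow_smul_relResolvent (hρ : ρ.PosSemidef) (hσ : σ.PosSemidef)
    (h : SupportLE ρ σ) :
    IntegrableOn (fun t : ℝ => t ^ (-1 / 2 : ℝ) • relResolvent ρ σ t) (Ioi 0) ∧
      ∫ t in Ioi (0 : ℝ), t ^ (-1 / 2 : ℝ) • relResolvent ρ σ t =
        (∫ t in Ioi 0, Real.rpowIntegrand₀₁ (1 / 2) t 1) • (invSqrt σ * cfc Real.sqrt ρ) := by
  simp only [relResolvent, ← doubleOpInt_smul]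
  have hint (x y : ℝ) (hx : 0 < x) (hy : 0 < y) :=
    integrableOn_and_integral_rpow_mul_inv_add_mul hx hy
  refine ⟨integrable_doubleOpInt hρ hσ h fun x y hx hy => (hint x y hx hy).1, ?_⟩
  rw [integral_doubleOpInt hρ hσ h fun x y hx hy => (hint x y hx hy).1,
    doubleOpInt_congr hρ hσ h fun x y hx hy => (hint x y hx hy).2, doubleOpInt_smul,
    ← cfc_mul_doubleOpInt, doubleOpInt_right hσ.isHermitian hρ.isHermitian, ← invSqrt, ← invSqrt,
    self_mul_invSqrt hρ]

theorem integrableOn_and_integral_re_trace_relResolvent (hρ : ρ.PosSemidef) (hσ : σ.PosSemidef)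
    (h : SupportLE ρ σ) :
    IntegrableOn (fun t => (relResolvent ρ σ t * ρ).trace.re - (1 + t)⁻¹ * ρ.trace.re) (Ioi 0) ∧
      ∫ t in Ioi 0, ((relResolvent ρ σ t * ρ).trace.re - (1 + t)⁻¹ * ρ.trace.re) =
        relEntropy ρ σ := by
  let reTrace : Matrix n n ℂ →L[ℝ] ℝ :=
    (Complex.reLm ∘ₗ (traceLinearMap n ℂ ℂ).restrictScalars ℝ).toContinuousLinearMap
  have heq (t : ℝ) : (relResolvent ρ σ t * ρ).trace.re - (1 + t)⁻¹ * ρ.trace.re =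
      reTrace (relResolvent ρ σ t * ρ - (1 + t)⁻¹ • ρ) := by
    simp [reTrace, trace_sub, trace_smul, Complex.smul_re, -Complex.real_smul]
  obtain ⟨hint, hval⟩ := integrableOn_and_integral_relResolvent_mul_sub hρ hσ h
  simp only [heq]
  refine ⟨reTrace.integrable_comp hint, ?_⟩
  rw [reTrace.integral_comp_comm hint, hval, relEntropy, Matrix.mul_sub]
  simp [reTrace, trace_sub, trace_mul_comm (cfc Real.log σ)]

end RelativeEntropy

section SchwarzMap

variable {m n : Type*} [Fintype m] [DecidableEq m] [Fintype n] [DecidableEq n]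

/-- A Schwarz map: a unital linear map satisfying Kadison's inequality
`Ψ(X)ᴴ Ψ(X) ≤ Ψ(Xᴴ X)` and compatible with adjoints. -/
structure IsSchwarzMap (Ψ : Matrix m m ℂ →ₗ[ℂ] Matrix n n ℂ) : Prop where
  map_one : Ψ 1 = 1
  map_conjTranspose (X : Matrix m m ℂ) : Ψ Xᴴ = (Ψ X)ᴴ
  schwarz (X : Matrix m m ℂ) : (Ψ (Xᴴ * X) - (Ψ X)ᴴ * Ψ X).PosSemidef

/-- `Ψ` is adjoint to `Φ` for the trace pairing: the Heisenberg picture of `Φ`. -/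
def IsTraceAdjoint {m n : Type*} [Fintype m] [Fintype n] (Φ : Matrix n n ℂ →ₗ[ℂ] Matrix m m ℂ)
    (Ψ : Matrix m m ℂ →ₗ[ℂ] Matrix n n ℂ) : Prop :=
  ∀ X M, (Ψ X * M).trace = (X * Φ M).trace

variable {Φ : Matrix n n ℂ →ₗ[ℂ] Matrix m m ℂ} {Ψ : Matrix m m ℂ →ₗ[ℂ] Matrix n n ℂ}

open scoped MatrixOrder Matrix.Norms.L2Operator in
theorem IsSchwarzMap.map_posSemidef (hΨ : IsSchwarzMap Ψ) {X : Matrix m m ℂ}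
    (hX : X.PosSemidef) : (Ψ X).PosSemidef := by
  obtain ⟨K, rfl⟩ := CStarAlgebra.nonneg_iff_eq_star_mul_self.mp (nonneg_iff_posSemidef.mpr hX)
  simpa [star_eq_conjTranspose] using (hΨ.schwarz K).add (posSemidef_conjTranspose_mul_self (Ψ K))

theorem IsTraceAdjoint.trace_map (hΦ : IsTraceAdjoint Φ Ψ) (hΨ : Ψ 1 = 1) (M : Matrix n n ℂ) :
    (Φ M).trace = M.trace := by
  simpa only [hΨ, Matrix.one_mul] using (hΦ 1 M).symm

theorem IsTraceAdjoint.map_posSemidef (hΦ : IsTraceAdjoint Φ Ψ) (hΨ : IsSchwarzMap Ψ)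
    {M : Matrix n n ℂ} (hM : M.PosSemidef) : (Φ M).PosSemidef :=
  posSemidef_of_forall_trace_mul_nonneg fun X hX =>
    hΦ X M ▸ trace_mul_nonneg_of_posSemidef (hΨ.map_posSemidef hX) hM

theorem SupportLE.map (hΦ : IsTraceAdjoint Φ Ψ) (hΨ : IsSchwarzMap Ψ) {ρ σ : Matrix n n ℂ}
    (hρ : ρ.PosSemidef) (hσ : σ.PosSemidef) (h : SupportLE ρ σ) : SupportLE (Φ ρ) (Φ σ) := by
  have hQ := posSemidef_one_sub_supportProj (Φ σ)
  have hσ' := hΦ.map_posSemidef hΨ hσ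
  have hQσ : Ψ (1 - supportProj (Φ σ)) * σ = 0 := by
    refine mul_eq_zero_of_trace_mul_eq_zero (hΨ.map_posSemidef hQ) hσ ?_
    rw [hΦ, one_sub_supportProj_mul_self hσ'.isHermitian, trace_zero]
  have hQρ : (1 - supportProj (Φ σ)) * Φ ρ = 0 :=
    mul_eq_zero_of_trace_mul_eq_zero hQ (hΦ.map_posSemidef hΨ hρ) <| by
      rw [← hΦ, h.mul_eq_zero hσ.isHermitian hQσ, trace_zero]
  rw [Matrix.sub_mul, Matrix.one_mul, sub_eq_zero] at hQρ
  exact hQρ.symm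

theorem IsTraceAdjoint.re_trace_conjTranspose_mul_mul_le (hΦ : IsTraceAdjoint Φ Ψ)
    (hΨ : IsSchwarzMap Ψ) {M : Matrix n n ℂ} (hM : M.PosSemidef) (X : Matrix m m ℂ) :
    ((Ψ X)ᴴ * Ψ X * M).trace.re ≤ (Xᴴ * X * Φ M).trace.re := by
  have h := (Complex.nonneg_iff.mp (trace_mul_nonneg_of_posSemidef (hΨ.schwarz X) hM)).1
  rwa [Matrix.sub_mul, trace_sub, hΦ, Complex.sub_re, sub_nonneg] at h

theorem IsTraceAdjoint.resolventForm_map_le (hΦ : IsTraceAdjoint Φ Ψ) (hΨ : IsSchwarzMap Ψ)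
    {ρ σ : Matrix n n ℂ} (hρ : ρ.PosSemidef) (hσ : σ.PosSemidef) {t : ℝ} (ht : 0 ≤ t)
    (X : Matrix m m ℂ) : resolventForm (Φ ρ) (Φ σ) t X ≤ resolventForm ρ σ t (Ψ X) := by
  have hlin : (Ψ X * ρ).trace.re = (X * Φ ρ).trace.re := congrArg Complex.re (hΦ X ρ)
  have hXσ := hΦ.re_trace_conjTranspose_mul_mul_le hΨ hσ Xᴴ
  have hXρ := hΦ.re_trace_conjTranspose_mul_mul_le hΨ hρ X
  rw [hΨ.map_conjTranspose, conjTranspose_conjTranspose, conjTranspose_conjTranspose] at hXσ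
  rw [resolventForm, resolventForm, hlin, trace_mul_cycle Xᴴ, trace_mul_cycle X (Φ ρ),
    trace_mul_cycle (Ψ X)ᴴ σ, trace_mul_cycle (Ψ X) ρ]
  nlinarith

variable {ρ σ : Matrix n n ℂ}

theorem re_trace_relResolvent_map_le (hΦ : IsTraceAdjoint Φ Ψ) (hΨ : IsSchwarzMap Ψ)
    (hρ : ρ.PosSemidef) (hσ : σ.PosSemidef) (h : SupportLE ρ σ) {t : ℝ} (ht : 0 < t) :
    (relResolvent (Φ ρ) (Φ σ) t * Φ ρ).trace.re ≤ (relResolvent ρ σ t * ρ).trace.re := by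
  rw [← resolventForm_relResolvent (hΦ.map_posSemidef hΨ hρ) (hΦ.map_posSemidef hΨ hσ)
    (h.map hΦ hΨ hρ hσ) ht]
  exact (hΦ.resolventForm_map_le hΨ hρ hσ ht.le _).trans (resolventForm_le hρ hσ h ht _)

open MeasureTheory Set

theorem relEntropy_map_le (hΦ : IsTraceAdjoint Φ Ψ) (hΨ : IsSchwarzMap Ψ) (hρ : ρ.PosSemidef)
    (hσ : σ.PosSemidef) (h : SupportLE ρ σ) : relEntropy (Φ ρ) (Φ σ) ≤ relEntropy ρ σ := by
  obtain ⟨hint, hval⟩ := integrableOn_and_integral_re_trace_relResolvent hρ hσ h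
  obtain ⟨hint', hval'⟩ := integrableOn_and_integral_re_trace_relResolvent
    (hΦ.map_posSemidef hΨ hρ) (hΦ.map_posSemidef hΨ hσ) (h.map hΦ hΨ hρ hσ)
  rw [← hval, ← hval']
  refine setIntegral_mono_on hint' hint measurableSet_Ioi fun t ht => ?_
  rw [hΦ.trace_map hΨ.map_one]
  exact sub_le_sub_right (re_trace_relResolvent_map_le hΦ hΨ hρ hσ h ht) _

theorem ae_map_relResolvent_mul_eq (hΦ : IsTraceAdjoint Φ Ψ) (hΨ : IsSchwarzMap Ψ)
    (hρ : ρ.PosSemidef) (hσ : σ.PosSemidef) (h : SupportLE ρ σ)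
    (heq : relEntropy (Φ ρ) (Φ σ) = relEntropy ρ σ) :
    ∀ᵐ t ∂volume.restrict (Ioi 0),
      Ψ (relResolvent (Φ ρ) (Φ σ) t) * ρ = relResolvent ρ σ t * ρ := by
  have hρ' := hΦ.map_posSemidef hΨ hρ
  have hσ' := hΦ.map_posSemidef hΨ hσ
  have h' := h.map hΦ hΨ hρ hσ
  obtain ⟨hint, hval⟩ := integrableOn_and_integral_re_trace_relResolvent hρ hσ h
  obtain ⟨hint', hval'⟩ := integrableOn_and_integral_re_trace_relResolvent hρ' hσ' h'
  rw [hΦ.trace_map hΨ.map_one] at hint' hval'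
  have hle : (fun t => (relResolvent (Φ ρ) (Φ σ) t * Φ ρ).trace.re - (1 + t)⁻¹ * ρ.trace.re)
      ≤ᵐ[volume.restrict (Ioi 0)]
        fun t => (relResolvent ρ σ t * ρ).trace.re - (1 + t)⁻¹ * ρ.trace.re := by
    filter_upwards [ae_restrict_mem measurableSet_Ioi] with t ht
    exact sub_le_sub_right (re_trace_relResolvent_map_le hΦ hΨ hρ hσ h ht) _
  filter_upwards [ae_restrict_mem measurableSet_Ioi,
    (integral_eq_iff_of_ae_le hint' hint hle).mp (by rw [hval, hval', heq])] with t ht htrace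
  refine mul_eq_relResolvent_mul_of_resolventForm_eq hρ hσ h ht
    ((resolventForm_le hρ hσ h ht _).antisymm ?_)
  rw [← sub_left_injective htrace, ← resolventForm_relResolvent hρ' hσ' h' ht]
  exact hΦ.resolventForm_map_le hΨ hρ hσ ht.le _

open scoped Matrix.Norms.L2Operator in
theorem map_invSqrt_mul_sqrt_mul_eq (hΦ : IsTraceAdjoint Φ Ψ) (hΨ : IsSchwarzMap Ψ)
    (hρ : ρ.PosSemidef) (hσ : σ.PosSemidef) (h : SupportLE ρ σ)
    (heq : relEntropy (Φ ρ) (Φ σ) = relEntropy ρ σ) :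
    Ψ (invSqrt (Φ σ) * cfc Real.sqrt (Φ ρ)) * ρ = invSqrt σ * cfc Real.sqrt ρ * ρ := by
  let mulρ : Matrix n n ℂ →L[ℝ] Matrix n n ℂ :=
    (LinearMap.mulRight ℝ ρ).toContinuousLinearMap
  let Ψmulρ : Matrix m m ℂ →L[ℝ] Matrix n n ℂ :=
    (LinearMap.mulRight ℝ ρ ∘ₗ Ψ.restrictScalars ℝ).toContinuousLinearMap
  obtain ⟨hint, hval⟩ := integrableOn_and_integral_rpow_smul_relResolvent hρ hσ h
  obtain ⟨hint', hval'⟩ := integrableOn_and_integral_rpow_smul_relResolvent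
    (hΦ.map_posSemidef hΨ hρ) (hΦ.map_posSemidef hΨ hσ) (h.map hΦ hΨ hρ hσ)
  have hae : (fun t : ℝ => Ψmulρ (t ^ (-1 / 2 : ℝ) • relResolvent (Φ ρ) (Φ σ) t))
      =ᵐ[volume.restrict (Ioi 0)] fun t : ℝ => mulρ (t ^ (-1 / 2 : ℝ) • relResolvent ρ σ t) := by
    filter_upwards [ae_map_relResolvent_mul_eq hΦ hΨ hρ hσ h heq] with t ht
    rw [map_smul, map_smul]
    exact congrArg _ ht
  have hintegral := integral_congr_ae hae
  rw [Ψmulρ.integral_comp_comm hint', mulρ.integral_comp_comm hint, hval, hval', map_smul,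
    map_smul] at hintegral
  have hpos : 0 < ∫ t in Ioi 0, Real.rpowIntegrand₀₁ (1 / 2) t 1 :=
    Real.integral_rpowIntegrand₀₁_one_pos (by norm_num)
  exact smul_right_injective _ hpos.ne' hintegral

end SchwarzMap

section PetzMap

/-- Conjugation `M ↦ K M Kᴴ` as a linear map. -/
def conjₗ {m n : Type*} [Fintype n] (K : Matrix m n ℂ) : Matrix n n ℂ →ₗ[ℂ] Matrix m m ℂ where
  toFun M := K * M * Kᴴ
  map_add' M N := by rw [Matrix.mul_add, Matrix.add_mul]
  map_smul' c M := by rw [Matrix.mul_smul, Matrix.smul_mul, RingHom.id_apply]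

theorem conjₗ_apply {m n : Type*} [Fintype n] (K : Matrix m n ℂ) (M : Matrix n n ℂ) :
    conjₗ K M = K * M * Kᴴ :=
  rfl

variable {m n : Type*} [Fintype m] [DecidableEq m] [Fintype n] [DecidableEq n]

/-- Petz's transpose map `Y ↦ σ^(1/2) Ψ(σ'^(-1/2) Y σ'^(-1/2)) σ^(1/2)`, which reverses `Φ`
on `σ` when `σ' = Φ σ` and `Ψ` is the trace adjoint of `Φ`. -/
def petzMap (Ψ : Matrix m m ℂ →ₗ[ℂ] Matrix n n ℂ) (σ : Matrix n n ℂ) (σ' : Matrix m m ℂ) :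
    Matrix m m ℂ →ₗ[ℂ] Matrix n n ℂ :=
  conjₗ (cfc Real.sqrt σ) ∘ₗ Ψ ∘ₗ conjₗ (invSqrt σ')

theorem petzMap_apply (Ψ : Matrix m m ℂ →ₗ[ℂ] Matrix n n ℂ) (σ : Matrix n n ℂ)
    (σ' Y : Matrix m m ℂ) :
    petzMap Ψ σ σ' Y =
      cfc Real.sqrt σ * Ψ (invSqrt σ' * Y * invSqrt σ') * cfc Real.sqrt σ := by
  rw [petzMap, LinearMap.comp_apply, LinearMap.comp_apply, conjₗ_apply, conjₗ_apply, invSqrt,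
    (isHermitian_cfc _ _).eq, (isHermitian_cfc _ _).eq]

variable {Φ : Matrix n n ℂ →ₗ[ℂ] Matrix m m ℂ} {Ψ : Matrix m m ℂ →ₗ[ℂ] Matrix n n ℂ}
  {ρ σ : Matrix n n ℂ}

theorem trace_petzMap (hΦ : IsTraceAdjoint Φ Ψ) (hσ : σ.PosSemidef) (hσ' : (Φ σ).PosSemidef)
    (Y : Matrix m m ℂ) : (petzMap Ψ σ (Φ σ) Y).trace = (supportProj (Φ σ) * Y).trace := by
  rw [petzMap_apply, trace_mul_cycle, sqrt_mul_sqrt hσ, trace_mul_comm, hΦ, trace_mul_comm,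
    ← Matrix.mul_assoc, ← Matrix.mul_assoc, trace_mul_comm, ← Matrix.mul_assoc,
    ← Matrix.mul_assoc, invSqrt_mul_self_mul_invSqrt hσ']

theorem mul_supportProj_eq_of_mul_eq {X Y : Matrix n n ℂ} (hρ : ρ.IsHermitian)
    (h : X * ρ = Y * ρ) : X * supportProj ρ = Y * supportProj ρ := by
  rw [supportProj, ← mul_cfc hρ, ← Matrix.mul_assoc, ← Matrix.mul_assoc, h]

theorem posSemidef_conj_sub_of_mul_eq_sqrt_mul (hρ : ρ.PosSemidef) {G : Matrix n n ℂ}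
    (hG : G * ρ = cfc Real.sqrt ρ * ρ) : (G * Gᴴ - ρ).PosSemidef := by
  have hGE : G * supportProj ρ = cfc Real.sqrt ρ := by
    rw [mul_supportProj_eq_of_mul_eq hρ.isHermitian hG, supportProj, cfc_commute_cfc,
      ← supportProj, supportProj_mul_sqrt hρ]
  have hGEG : G * supportProj ρ * Gᴴ = ρ := by
    have h := congrArg (fun M => M * Mᴴ) hGE
    rwa [conjTranspose_mul, (isHermitian_supportProj ρ).eq, Matrix.mul_assoc,
      ← Matrix.mul_assoc _ _ Gᴴ, supportProj_mul_supportProj, (isHermitian_cfc _ _).eq,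
      sqrt_mul_sqrt hρ, ← Matrix.mul_assoc] at h
  have h := (posSemidef_one_sub_supportProj ρ).mul_mul_conjTranspose_same G
  rwa [Matrix.mul_sub, Matrix.mul_one, Matrix.sub_mul, hGEG] at h

theorem posSemidef_petzMap_map_sub (hΦ : IsTraceAdjoint Φ Ψ) (hΨ : IsSchwarzMap Ψ)
    (hρ : ρ.PosSemidef) (hσ : σ.PosSemidef) (h : SupportLE ρ σ)
    (heq : relEntropy (Φ ρ) (Φ σ) = relEntropy ρ σ) :
    (petzMap Ψ σ (Φ σ) (Φ ρ) - ρ).PosSemidef := by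
  set Z := invSqrt (Φ σ) * cfc Real.sqrt (Φ ρ)
  have hZ : invSqrt (Φ σ) * Φ ρ * invSqrt (Φ σ) = Zᴴᴴ * Zᴴ := by
    simp only [Z]
    rw [conjTranspose_conjTranspose, conjTranspose_mul, (isHermitian_cfc _ _).eq, invSqrt,
      (isHermitian_cfc _ _).eq, ← invSqrt, ← Matrix.mul_assoc,
      Matrix.mul_assoc _ (cfc Real.sqrt _) (cfc Real.sqrt _),
      sqrt_mul_sqrt (hΦ.map_posSemidef hΨ hρ)]
  have hG : cfc Real.sqrt σ * Ψ Z * ρ = cfc Real.sqrt ρ * ρ := by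
    rw [Matrix.mul_assoc, map_invSqrt_mul_sqrt_mul_eq hΦ hΨ hρ hσ h heq, ← Matrix.mul_assoc,
      ← Matrix.mul_assoc, sqrt_mul_invSqrt hσ, h.mul_sqrt hρ]
  have hschwarz := (hΨ.schwarz Zᴴ).mul_mul_conjTranspose_same (cfc Real.sqrt σ)
  rw [← hZ, hΨ.map_conjTranspose, conjTranspose_conjTranspose, Matrix.mul_sub, Matrix.sub_mul,
    (isHermitian_cfc _ _).eq, ← petzMap_apply] at hschwarz
  have hsum := hschwarz.add (posSemidef_conj_sub_of_mul_eq_sqrt_mul hρ hG)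
  rwa [conjTranspose_mul, (isHermitian_cfc _ _).eq, ← Matrix.mul_assoc, ← Matrix.mul_assoc,
    sub_add_sub_cancel] at hsum

theorem petzMap_map_eq (hΦ : IsTraceAdjoint Φ Ψ) (hΨ : IsSchwarzMap Ψ) (hρ : ρ.PosSemidef)
    (hσ : σ.PosSemidef) (h : SupportLE ρ σ) (heq : relEntropy (Φ ρ) (Φ σ) = relEntropy ρ σ) :
    petzMap Ψ σ (Φ σ) (Φ ρ) = ρ := by
  refine sub_eq_zero.mp ((posSemidef_petzMap_map_sub hΦ hΨ hρ hσ h heq).trace_eq_zero_iff.mp ?_)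
  rw [trace_sub, trace_petzMap hΦ hσ (hΦ.map_posSemidef hΨ hσ), h.map hΦ hΨ hρ hσ,
    hΦ.trace_map hΨ.map_one, sub_self]

end PetzMap

section PartialTrace

variable {A B C : Type*}

theorem posSemidef_ptraceRight [Fintype B] {M : Matrix (A × B) (A × B) ℂ} (hM : M.PosSemidef) :
    (ptraceRight M).PosSemidef := by
  have h : ptraceRight M = ∑ b, M.submatrix (·, b) (·, b) := by
    ext
    simp [ptraceRight, Matrix.sum_apply]
  exact h ▸ posSemidef_sum _ fun b _ => hM.submatrix (·, b)

theorem posSemidef_ptraceLeft [Fintype A] {M : Matrix (A × B) (A × B) ℂ} (hM : M.PosSemidef) :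
    (ptraceLeft M).PosSemidef := by
  have h : ptraceLeft M = ∑ a, M.submatrix (a, ·) (a, ·) := by
    ext
    simp [ptraceLeft, Matrix.sum_apply]
  exact h ▸ posSemidef_sum _ fun a _ => hM.submatrix (a, ·)

theorem posSemidef_ptrace3E [Fintype C] {M : Matrix (A × B × C) (A × B × C) ℂ}
    (hM : M.PosSemidef) : (ptrace3E M).PosSemidef :=
  posSemidef_ptraceRight (hM.submatrix (Equiv.prodAssoc A B C))

variable [Fintype A] [Fintype B]

theorem trace_ptraceRight (M : Matrix (A × B) (A × B) ℂ) : (ptraceRight M).trace = M.trace :=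
  (Fintype.sum_prod_type fun x => M x x).symm

theorem trace_ptraceLeft (M : Matrix (A × B) (A × B) ℂ) : (ptraceLeft M).trace = M.trace :=
  (Fintype.sum_prod_type_right fun x => M x x).symm

end PartialTrace

section IdTensor

variable {A B C n : Type*}

/-- The partial trace over the second factor as a linear map. -/
def ptraceRightₗ (A B : Type*) [Fintype B] :
    Matrix (A × B) (A × B) ℂ →ₗ[ℂ] Matrix A A ℂ where
  toFun := ptraceRight
  map_add' M N := by
    ext
    simp [ptraceRight, Finset.sum_add_distrib]
  map_smul' c M := by
    ext
    simp [ptraceRight, Finset.mul_sum]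

theorem idTensor_ptraceRightₗ [Fintype B] (M : Matrix (n × A × B) (n × A × B) ℂ) :
    idTensor n (ptraceRightₗ A B) M = ptrace3E M :=
  rfl

theorem idTensor_comp (Ψ : Matrix B B ℂ →ₗ[ℂ] Matrix C C ℂ) (Φ : Matrix A A ℂ →ₗ[ℂ] Matrix B B ℂ)
    (M : Matrix (n × A) (n × A) ℂ) : idTensor n (Ψ ∘ₗ Φ) M = idTensor n Ψ (idTensor n Φ M) :=
  rfl

/-- The map `idTensor n Φ = id_n ⊗ Φ` as a linear map. -/
def idTensorₗ (n : Type*) (Φ : Matrix A A ℂ →ₗ[ℂ] Matrix B B ℂ) :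
    Matrix (n × A) (n × A) ℂ →ₗ[ℂ] Matrix (n × B) (n × B) ℂ where
  toFun := idTensor n Φ
  map_add' M N := by
    ext x y
    exact congrFun₂ (map_add Φ (M.submatrix (Prod.mk x.1) (Prod.mk y.1))
      (N.submatrix (Prod.mk x.1) (Prod.mk y.1))) x.2 y.2
  map_smul' c M := by
    ext x y
    exact congrFun₂ (map_smul Φ c (M.submatrix (Prod.mk x.1) (Prod.mk y.1))) x.2 y.2

theorem idTensorₗ_apply (Φ : Matrix A A ℂ →ₗ[ℂ] Matrix B B ℂ) (M : Matrix (n × A) (n × A) ℂ) :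
    idTensorₗ n Φ M = idTensor n Φ M :=
  rfl

theorem idTensor_kronecker (Φ : Matrix A A ℂ →ₗ[ℂ] Matrix B B ℂ) (N : Matrix n n ℂ)
    (M : Matrix A A ℂ) : idTensor n Φ (N ⊗ₖ M) = N ⊗ₖ Φ M := by
  ext x y
  exact congrFun₂ (map_smul Φ (N x.1 y.1) M) x.2 y.2

theorem idTensor_conjₗ [Fintype A] [Fintype n] [DecidableEq n] (K : Matrix B A ℂ)
    (M : Matrix (n × A) (n × A) ℂ) :
    idTensor n (conjₗ K) M = ((1 : Matrix n n ℂ) ⊗ₖ K) * M * ((1 : Matrix n n ℂ) ⊗ₖ K)ᴴ := by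
  ext
  simp [idTensor, conjₗ, mul_apply, Fintype.sum_prod_type, one_apply, kroneckerMap_apply,
    apply_ite star, Finset.sum_mul, ite_mul, mul_ite]

theorem ptraceLeft_eq_sum_submatrix [Fintype n] (M : Matrix (n × A) (n × A) ℂ) :
    ptraceLeft M = ∑ i, M.submatrix (Prod.mk i) (Prod.mk i) := by
  ext
  simp [ptraceLeft, Matrix.sum_apply]

theorem ptraceLeft_idTensor [Fintype n] (Φ : Matrix A A ℂ →ₗ[ℂ] Matrix B B ℂ)
    (M : Matrix (n × A) (n × A) ℂ) : ptraceLeft (idTensor n Φ M) = Φ (ptraceLeft M) := by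
  rw [ptraceLeft_eq_sum_submatrix, ptraceLeft_eq_sum_submatrix, map_sum]
  rfl

variable [Fintype A] [Fintype B]

theorem ptraceRight_idTensor {Φ : Matrix A A ℂ →ₗ[ℂ] Matrix B B ℂ}
    (hΦ : ∀ M, (Φ M).trace = M.trace) (M : Matrix (n × A) (n × A) ℂ) :
    ptraceRight (idTensor n Φ M) = ptraceRight M := by
  ext i j
  exact hΦ (M.submatrix (Prod.mk i) (Prod.mk j))

theorem trace_idTensor [Fintype n] {Φ : Matrix A A ℂ →ₗ[ℂ] Matrix B B ℂ}
    (hΦ : ∀ M, (Φ M).trace = M.trace) (M : Matrix (n × A) (n × A) ℂ) :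
    (idTensor n Φ M).trace = M.trace := by
  rw [← trace_ptraceRight, ptraceRight_idTensor hΦ, trace_ptraceRight]

theorem trace_mul_eq_sum_trace_submatrix [Fintype n] (M N : Matrix (n × A) (n × A) ℂ) :
    (M * N).trace = ∑ i, ∑ j,
      (M.submatrix (Prod.mk i) (Prod.mk j) * N.submatrix (Prod.mk j) (Prod.mk i)).trace := by
  simp only [trace, diag_apply, mul_apply, Fintype.sum_prod_type, submatrix_apply]
  exact Finset.sum_congr rfl fun i _ => Finset.sum_comm

theorem IsTraceAdjoint.idTensor [Fintype n] {Φ : Matrix A A ℂ →ₗ[ℂ] Matrix B B ℂ}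
    {Ψ : Matrix B B ℂ →ₗ[ℂ] Matrix A A ℂ} (h : IsTraceAdjoint Φ Ψ) :
    IsTraceAdjoint (idTensorₗ n Φ) (idTensorₗ n Ψ) := by
  intro X M
  rw [trace_mul_eq_sum_trace_submatrix, trace_mul_eq_sum_trace_submatrix]
  exact Finset.sum_congr rfl fun i _ => Finset.sum_congr rfl fun j _ =>
    h (X.submatrix (Prod.mk i) (Prod.mk j)) (M.submatrix (Prod.mk j) (Prod.mk i))

end IdTensor

section CompletelyPositive

variable {A B C : Type*} [Fintype A] [Fintype B] [Fintype C]
  {Φ : Matrix A A ℂ →ₗ[ℂ] Matrix B B ℂ}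

theorem IsCPMap.posSemidef_idTensor (hΦ : IsCPMap Φ) {n : Type*} [Finite n]
    {M : Matrix (n × A) (n × A) ℂ} (hM : M.PosSemidef) : (idTensor n Φ M).PosSemidef := by
  obtain ⟨k, ⟨e⟩⟩ := Finite.exists_equiv_fin n
  have h := (hΦ k _ (hM.submatrix (Prod.map e.symm id))).submatrix (Prod.map e id)
  simpa only [idTensor, submatrix, of_apply, Prod.map, id, e.symm_apply_apply] using h

theorem IsCPMap.comp {Ψ : Matrix B B ℂ →ₗ[ℂ] Matrix C C ℂ} (hΨ : IsCPMap Ψ) (hΦ : IsCPMap Φ) :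
    IsCPMap (Ψ ∘ₗ Φ) :=
  fun k M hM => hΨ k _ (hΦ k M hM)

theorem IsCPMap.add {Ψ : Matrix A A ℂ →ₗ[ℂ] Matrix B B ℂ} (hΦ : IsCPMap Φ) (hΨ : IsCPMap Ψ) :
    IsCPMap (Φ + Ψ) :=
  fun k M hM => (hΦ k M hM).add (hΨ k M hM)

theorem IsCPMap.idTensorₗ (hΦ : IsCPMap Φ) (n : Type*) [Fintype n] :
    IsCPMap (idTensorₗ n Φ) := by
  intro k M hM
  exact (hΦ.posSemidef_idTensor (hM.submatrix (Equiv.prodAssoc (Fin k) n A))).submatrix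
    (Equiv.prodAssoc (Fin k) n B).symm

theorem isCPMap_conjₗ (K : Matrix B A ℂ) : IsCPMap (conjₗ K) :=
  fun k _ hM => idTensor_conjₗ (n := Fin k) K _ ▸ hM.mul_mul_conjTranspose_same _

/-- The map `M ↦ Tr(M) τ`, which discards its input and prepares `τ`. -/
def discardPrepare (A : Type*) [Fintype A] (τ : Matrix B B ℂ) :
    Matrix A A ℂ →ₗ[ℂ] Matrix B B ℂ :=
  (traceLinearMap A ℂ ℂ).smulRight τ

theorem isCPMap_discardPrepare {τ : Matrix B B ℂ} (hτ : τ.PosSemidef) :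
    IsCPMap (discardPrepare A τ) :=
  fun _ _ hM => (posSemidef_ptraceRight hM).kronecker hτ

theorem IsCPTP.comp {Ψ : Matrix B B ℂ →ₗ[ℂ] Matrix C C ℂ} (hΨ : IsCPTP Ψ) (hΦ : IsCPTP Φ) :
    IsCPTP (Ψ ∘ₗ Φ) :=
  ⟨hΨ.1.comp hΦ.1, fun M => (hΨ.2 _).trans (hΦ.2 M)⟩

theorem IsCPTP.idTensorₗ (hΦ : IsCPTP Φ) (n : Type*) [Fintype n] : IsCPTP (idTensorₗ n Φ) :=
  ⟨hΦ.1.idTensorₗ n, trace_idTensor hΦ.2⟩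

theorem isCPTP_ptraceRightₗ : IsCPTP (ptraceRightₗ A B) :=
  ⟨fun _ _ hM => posSemidef_ptrace3E hM, trace_ptraceRight⟩

theorem isCPTP_conjₗ [DecidableEq A] {V : Matrix B A ℂ} (hV : Vᴴ * V = 1) : IsCPTP (conjₗ V) :=
  ⟨isCPMap_conjₗ V, fun M => by rw [conjₗ_apply, trace_mul_cycle, hV, Matrix.one_mul]⟩

theorem IsCPMap.posSemidef_fromBlocks (hΦ : IsCPMap Φ) {X Y Z W : Matrix A A ℂ}
    (h : (fromBlocks X Y Z W).PosSemidef) :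
    (fromBlocks (Φ X) (Φ Y) (Φ Z) (Φ W)).PosSemidef := by
  have hΦ_bool := hΦ.posSemidef_idTensor (h.submatrix (Equiv.boolProdEquivSum A))
  convert hΦ_bool.submatrix (Equiv.boolProdEquivSum B).symm
  ext (i | i) (j | j) <;> rfl

theorem posSemidef_fromBlocks_one_iff {m n : Type*} [Fintype m] [DecidableEq m] [Finite n]
    (X : Matrix m n ℂ) (Y : Matrix n n ℂ) :
    (fromBlocks 1 X Xᴴ Y).PosSemidef ↔ (Y - Xᴴ * X).PosSemidef := by
  let _ : Invertible (1 : Matrix m m ℂ) := invertibleOne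
  rw [PosDef.one.fromBlocks₁₁, inv_one, Matrix.mul_one]

theorem IsCPMap.isSchwarzMap [DecidableEq A] [DecidableEq B] (hΦ : IsCPMap Φ) (h1 : Φ 1 = 1) :
    IsSchwarzMap Φ := by
  have hblock (X : Matrix A A ℂ) : (fromBlocks 1 (Φ X) (Φ Xᴴ) (Φ (Xᴴ * X))).PosSemidef := by
    have h : (fromBlocks 1 X Xᴴ (Xᴴ * X)).PosSemidef := by
      rw [posSemidef_fromBlocks_one_iff, sub_self]
      exact .zero
    simpa only [h1] using hΦ.posSemidef_fromBlocks h
  have hstar (X : Matrix A A ℂ) : Φ Xᴴ = (Φ X)ᴴ :=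
    (isHermitian_fromBlocks_iff.mp (hblock X).isHermitian).2.1.symm
  refine ⟨h1, hstar, fun X => ?_⟩
  rw [← posSemidef_fromBlocks_one_iff, ← hstar]
  exact hblock X

/-- The adjoint of a linear map for the trace pairing. -/
def traceDual [DecidableEq A] (Φ : Matrix A A ℂ →ₗ[ℂ] Matrix B B ℂ) :
    Matrix B B ℂ →ₗ[ℂ] Matrix A A ℂ where
  toFun X := of fun i j => (X * Φ (single j i 1)).trace
  map_add' X Y := by
    ext
    simp [Matrix.add_mul]
  map_smul' c X := by
    ext
    simp

theorem isTraceAdjoint_traceDual [DecidableEq A] (Φ : Matrix A A ℂ →ₗ[ℂ] Matrix B B ℂ) :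
    IsTraceAdjoint Φ (traceDual Φ) := by
  intro X M
  conv_rhs => rw [matrix_eq_sum_single M]
  have hsingle (i j : A) : single i j (M i j) = M i j • single i j 1 := by simp
  simp only [hsingle, map_sum, map_smul, Matrix.mul_sum, Matrix.mul_smul, trace_sum, trace_smul]
  rw [Finset.sum_comm]
  simp [trace, traceDual, mul_apply, mul_comm]

theorem IsTraceAdjoint.isCPMap {Ψ : Matrix B B ℂ →ₗ[ℂ] Matrix A A ℂ} (h : IsTraceAdjoint Φ Ψ)
    (hΦ : IsCPMap Φ) : IsCPMap Ψ := by
  intro k X hX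
  refine posSemidef_of_forall_trace_mul_nonneg fun M hM => ?_
  rw [trace_mul_comm]
  exact (h.idTensor X M).symm ▸ trace_mul_nonneg_of_posSemidef hX (hΦ k M hM)

theorem IsTraceAdjoint.map_one [DecidableEq A] [DecidableEq B]
    {Ψ : Matrix B B ℂ →ₗ[ℂ] Matrix A A ℂ} (h : IsTraceAdjoint Φ Ψ)
    (hΦ : ∀ M, (Φ M).trace = M.trace) : Ψ 1 = 1 :=
  ext_iff_trace_mul_right.mpr fun M => by rw [h, Matrix.one_mul, Matrix.one_mul, hΦ]

theorem IsTraceAdjoint.isSchwarzMap [DecidableEq A] [DecidableEq B]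
    {Ψ : Matrix B B ℂ →ₗ[ℂ] Matrix A A ℂ} (h : IsTraceAdjoint Φ Ψ) (hΦ : IsCPTP Φ) :
    IsSchwarzMap Ψ :=
  (h.isCPMap hΦ.1).isSchwarzMap (h.map_one hΦ.2)

end CompletelyPositive

section Kronecker

variable {m n : Type*}

theorem posSemidef_one_kronecker [Finite m] [DecidableEq m] [Finite n]
    {A : Matrix n n ℂ} (hA : A.PosSemidef) :
    ((1 : Matrix m m ℂ) ⊗ₖ A).PosSemidef :=
  PosSemidef.one.kronecker hA

theorem trace_one_kronecker_mul [Fintype m] [DecidableEq m] [Fintype n]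
    (X : Matrix n n ℂ) (M : Matrix (m × n) (m × n) ℂ) :
    (((1 : Matrix m m ℂ) ⊗ₖ X) * M).trace = (X * ptraceLeft M).trace := by
  rw [ptraceLeft_eq_sum_submatrix, Matrix.mul_sum, trace_sum]
  simp [trace, mul_apply, Fintype.sum_prod_type, one_apply, ite_mul]

theorem one_kronecker_mul_eq_zero [Fintype m] [DecidableEq m] [Fintype n]
    {ρ : Matrix (m × n) (m × n) ℂ} (hρ : ρ.PosSemidef) {X : Matrix n n ℂ} (hX : X.PosSemidef)
    (h : X * ptraceLeft ρ = 0) : ((1 : Matrix m m ℂ) ⊗ₖ X) * ρ = 0 := by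
  refine mul_eq_zero_of_trace_mul_eq_zero (posSemidef_one_kronecker hX) hρ ?_
  rw [trace_one_kronecker_mul, h, trace_zero]

variable [Fintype m] [DecidableEq m] [Fintype n] [DecidableEq n]

/-- The embedding `A ↦ 1 ⊗ A` of the matrices on the second tensor factor. -/
def oneKroneckerHom (m n : Type*) [Fintype m] [DecidableEq m] [Fintype n] [DecidableEq n] :
    Matrix n n ℂ →⋆ₐ[ℂ] Matrix (m × n) (m × n) ℂ where
  toFun A := (1 : Matrix m m ℂ) ⊗ₖ A
  map_one' := one_kronecker_one
  map_mul' A B := by rw [← mul_kronecker_mul, Matrix.one_mul]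
  map_zero' := kronecker_zero _
  map_add' := kronecker_add _
  commutes' c := by
    rw [Algebra.algebraMap_eq_smul_one, kronecker_smul, one_kronecker_one,
      Algebra.algebraMap_eq_smul_one]
  map_star' A := by
    rw [star_eq_conjTranspose, star_eq_conjTranspose, conjTranspose_kronecker, conjTranspose_one]

theorem cfc_one_kronecker {A : Matrix n n ℂ} (hA : A.IsHermitian) (f : ℝ → ℝ) :
    cfc f ((1 : Matrix m m ℂ) ⊗ₖ A) = 1 ⊗ₖ cfc f A :=
  ((oneKroneckerHom m n).map_cfc f A (continuousOn_spectrum A f)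
    (LinearMap.continuous_of_finiteDimensional (oneKroneckerHom m n).toLinearMap)
    hA.isSelfAdjoint (hA.isSelfAdjoint.map (oneKroneckerHom m n))).symm

theorem supportProj_one_kronecker {A : Matrix n n ℂ} (hA : A.IsHermitian) :
    supportProj ((1 : Matrix m m ℂ) ⊗ₖ A) = 1 ⊗ₖ supportProj A :=
  cfc_one_kronecker hA _

theorem supportLE_one_kronecker_ptraceLeft {ρ : Matrix (m × n) (m × n) ℂ} (hρ : ρ.PosSemidef) :
    SupportLE ρ ((1 : Matrix m m ℂ) ⊗ₖ ptraceLeft ρ) := by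
  have hB := (posSemidef_ptraceLeft hρ).isHermitian
  have h := one_kronecker_mul_eq_zero hρ (posSemidef_one_sub_supportProj _)
    (one_sub_supportProj_mul_self hB)
  have hsub : (1 : Matrix m m ℂ) ⊗ₖ (1 - supportProj (ptraceLeft ρ)) =
      1 - supportProj ((1 : Matrix m m ℂ) ⊗ₖ ptraceLeft ρ) := by
    rw [supportProj_one_kronecker hB, eq_sub_iff_add_eq, ← kronecker_add, sub_add_cancel,
      one_kronecker_one]
  rwa [hsub, Matrix.sub_mul, Matrix.one_mul, sub_eq_zero, eq_comm] at h

end Kronecker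

section MutualInfo

variable {A B : Type*} [Fintype A] [DecidableEq A] [Fintype B] [DecidableEq B]

theorem vnEntropy_eq_neg_re_trace_mul_log {ρ : Matrix A A ℂ} (hρ : ρ.IsHermitian) :
    vnEntropy ρ = -(ρ * cfc Real.log ρ).trace.re := by
  rw [vnEntropy, dif_pos hρ, mul_cfc hρ, hρ.cfc_eq, IsHermitian.cfc,
    Unitary.conjStarAlgAut_apply, trace_mul_cycle, Unitary.coe_star_mul_self, Matrix.one_mul,
    trace_diagonal]
  simp [Real.negMulLog]

theorem mutualInfo_eq_add_relEntropy {ρ : Matrix (A × B) (A × B) ℂ} (hρ : ρ.PosSemidef) :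
    mutualInfo ρ = vnEntropy (ptraceRight ρ) +
      relEntropy ρ ((1 : Matrix A A ℂ) ⊗ₖ ptraceLeft ρ) := by
  have hB := (posSemidef_ptraceLeft hρ).isHermitian
  rw [mutualInfo, relEntropy, cfc_one_kronecker hB, Matrix.mul_sub, trace_sub, Complex.sub_re,
    trace_mul_comm ρ (_ ⊗ₖ _), trace_one_kronecker_mul, trace_mul_comm _ (ptraceLeft ρ),
    vnEntropy_eq_neg_re_trace_mul_log hB, vnEntropy_eq_neg_re_trace_mul_log hρ.isHermitian]
  ring

end MutualInfo

section DataProcessing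

variable {R A B : Type*} [Fintype R] [DecidableEq R] [Fintype A] [DecidableEq A] [Fintype B]
  [DecidableEq B] {Φ : Matrix A A ℂ →ₗ[ℂ] Matrix B B ℂ} {ρ : Matrix (R × A) (R × A) ℂ}

theorem mutualInfo_sub_mutualInfo_idTensor (hΦ : IsCPTP Φ) (hρ : ρ.PosSemidef) :
    mutualInfo ρ - mutualInfo (idTensor R Φ ρ) =
      relEntropy ρ ((1 : Matrix R R ℂ) ⊗ₖ ptraceLeft ρ) -
        relEntropy (idTensorₗ R Φ ρ) (idTensorₗ R Φ ((1 : Matrix R R ℂ) ⊗ₖ ptraceLeft ρ)) := by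
  have hσ : idTensorₗ R Φ ((1 : Matrix R R ℂ) ⊗ₖ ptraceLeft ρ) =
      1 ⊗ₖ ptraceLeft (idTensor R Φ ρ) :=
    (idTensor_kronecker Φ 1 _).trans (by rw [ptraceLeft_idTensor])
  rw [mutualInfo_eq_add_relEntropy hρ,
    mutualInfo_eq_add_relEntropy (hΦ.1.posSemidef_idTensor hρ), ptraceRight_idTensor hΦ.2, hσ,
    add_sub_add_left_eq_sub]
  rfl

theorem mutualInfo_idTensor_le (hΦ : IsCPTP Φ) (hρ : ρ.PosSemidef) :
    mutualInfo (idTensor R Φ ρ) ≤ mutualInfo ρ := by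
  have hadj : IsTraceAdjoint (idTensorₗ R Φ) (idTensorₗ R (traceDual Φ)) :=
    (isTraceAdjoint_traceDual Φ).idTensor
  rw [← sub_nonneg, mutualInfo_sub_mutualInfo_idTensor hΦ hρ, sub_nonneg]
  exact relEntropy_map_le hadj (hadj.isSchwarzMap (hΦ.idTensorₗ R)) hρ
    (posSemidef_one_kronecker (posSemidef_ptraceLeft hρ)) (supportLE_one_kronecker_ptraceLeft hρ)

end DataProcessing

section Recovery

variable {R A B : Type*} [Fintype R] [DecidableEq R] [Fintype A] [DecidableEq A] [Fintype B]
  [DecidableEq B] {Φ : Matrix A A ℂ →ₗ[ℂ] Matrix B B ℂ}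

theorem idTensorₗ_petzMap (Ψ : Matrix B B ℂ →ₗ[ℂ] Matrix A A ℂ) {σ : Matrix A A ℂ}
    {σ' : Matrix B B ℂ} (hσ : σ.IsHermitian) (hσ' : σ'.IsHermitian) :
    idTensorₗ R (petzMap Ψ σ σ') =
      petzMap (idTensorₗ R Ψ) ((1 : Matrix R R ℂ) ⊗ₖ σ) ((1 : Matrix R R ℂ) ⊗ₖ σ') := by
  ext1 Y
  rw [idTensorₗ_apply, petzMap, petzMap, idTensor_comp, idTensor_comp, idTensor_conjₗ,
    idTensor_conjₗ, invSqrt, invSqrt, ← cfc_one_kronecker hσ, ← cfc_one_kronecker hσ']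
  rfl

/-- The Petz map of `Φ` at `τ`, completed to a trace preserving map by preparing `τ` on the
kernel of `Φ τ`. -/
def recoveryMap (Φ : Matrix A A ℂ →ₗ[ℂ] Matrix B B ℂ) (τ : Matrix A A ℂ) :
    Matrix B B ℂ →ₗ[ℂ] Matrix A A ℂ :=
  petzMap (traceDual Φ) τ (Φ τ) + discardPrepare B τ ∘ₗ conjₗ (1 - supportProj (Φ τ))

theorem isCPTP_recoveryMap (hΦ : IsCPTP Φ) {τ : Matrix A A ℂ} (hτ : IsState τ) :
    IsCPTP (recoveryMap Φ τ) := by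
  have hadj := isTraceAdjoint_traceDual Φ
  have hτ' : (Φ τ).PosSemidef := hadj.map_posSemidef (hadj.isSchwarzMap hΦ) hτ.1
  have hcomp := hadj.isCPMap hΦ.1
  refine ⟨((isCPMap_conjₗ _).comp (hcomp.comp (isCPMap_conjₗ _))).add
    ((isCPMap_discardPrepare hτ.1).comp (isCPMap_conjₗ _)), fun Y => ?_⟩
  have hprep : (discardPrepare B τ (conjₗ (1 - supportProj (Φ τ)) Y)).trace =
      ((1 - supportProj (Φ τ)) * Y).trace := by
    rw [conjₗ_apply, (isHermitian_one_sub_supportProj _).eq, discardPrepare,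
      LinearMap.smulRight_apply, trace_smul, hτ.2, traceLinearMap_apply, smul_eq_mul, mul_one,
      trace_mul_cycle, one_sub_supportProj_mul_one_sub_supportProj]
  rw [recoveryMap, LinearMap.add_apply, trace_add, trace_petzMap hadj hτ.1 hτ',
    LinearMap.comp_apply, hprep, ← trace_add, ← Matrix.add_mul, add_sub_cancel, Matrix.one_mul]

theorem idTensor_petzMap_map_eq {ρ : Matrix (R × A) (R × A) ℂ} (hΦ : IsCPTP Φ)
    (hρ : ρ.PosSemidef) (h : mutualInfo (idTensor R Φ ρ) = mutualInfo ρ) :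
    idTensor R (petzMap (traceDual Φ) (ptraceLeft ρ) (Φ (ptraceLeft ρ))) (idTensor R Φ ρ) = ρ := by
  have hadj : IsTraceAdjoint (idTensorₗ R Φ) (idTensorₗ R (traceDual Φ)) :=
    (isTraceAdjoint_traceDual Φ).idTensor
  have hτ := posSemidef_ptraceLeft hρ
  have hτ' := posSemidef_ptraceLeft (hΦ.1.posSemidef_idTensor hρ)
  rw [ptraceLeft_idTensor] at hτ'
  have hrel := sub_eq_zero.mpr h.symm
  rw [mutualInfo_sub_mutualInfo_idTensor hΦ hρ, sub_eq_zero] at hrel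
  have hpetz := petzMap_map_eq hadj (hadj.isSchwarzMap (hΦ.idTensorₗ R)) hρ
    (posSemidef_one_kronecker hτ) (supportLE_one_kronecker_ptraceLeft hρ) hrel.symm
  rwa [idTensorₗ_apply Φ (_ ⊗ₖ _), idTensor_kronecker, ← idTensorₗ_petzMap _ hτ.isHermitian
    hτ'.isHermitian] at hpetz

theorem idTensor_recoveryMap {ρ : Matrix (R × A) (R × A) ℂ} (hΦ : IsCPTP Φ) (hρ : ρ.PosSemidef)
    (h : mutualInfo (idTensor R Φ ρ) = mutualInfo ρ) :
    idTensor R (recoveryMap Φ (ptraceLeft ρ)) (idTensor R Φ ρ) = ρ := by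
  have hρ' := hΦ.1.posSemidef_idTensor (n := R) hρ
  have hkernel :
      idTensor R (conjₗ (1 - supportProj (Φ (ptraceLeft ρ)))) (idTensor R Φ ρ) = 0 := by
    rw [idTensor_conjₗ, ← ptraceLeft_idTensor, one_kronecker_mul_eq_zero hρ'
      (posSemidef_one_sub_supportProj _)
      (one_sub_supportProj_mul_self (posSemidef_ptraceLeft hρ').isHermitian), Matrix.zero_mul]
  have hadd : idTensor R (recoveryMap Φ (ptraceLeft ρ)) (idTensor R Φ ρ) =
      idTensor R (petzMap (traceDual Φ) (ptraceLeft ρ) (Φ (ptraceLeft ρ))) (idTensor R Φ ρ) +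
        idTensor R (discardPrepare B (ptraceLeft ρ)) (idTensor R
          (conjₗ (1 - supportProj (Φ (ptraceLeft ρ)))) (idTensor R Φ ρ)) :=
    rfl
  rw [hadd, hkernel, ← idTensorₗ_apply (discardPrepare _ _), map_zero, add_zero,
    idTensor_petzMap_map_eq hΦ hρ h]

end Recovery

section Tripartite

variable {R Q E : Type*} [Fintype R] [DecidableEq R] [Fintype Q] [DecidableEq Q] [Fintype E]
  [DecidableEq E]

theorem condMutualInfo_eq_sub (ρ : Matrix (R × Q × E) (R × Q × E) ℂ) :
    condMutualInfo ρ = mutualInfo ρ - mutualInfo (ptrace3E ρ) := by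
  have h : ptraceRight (ptrace3E ρ) = ptraceRight ρ :=
    ptraceRight_idTensor (Φ := ptraceRightₗ Q E) trace_ptraceRight ρ
  rw [condMutualInfo, mutualInfo, mutualInfo, h]
  ring

theorem condMutualInfo_nonneg {ρ : Matrix (R × Q × E) (R × Q × E) ℂ} (hρ : ρ.PosSemidef) :
    0 ≤ condMutualInfo ρ := by
  rw [condMutualInfo_eq_sub, sub_nonneg, ← idTensor_ptraceRightₗ]
  exact mutualInfo_idTensor_le isCPTP_ptraceRightₗ hρ

theorem exists_isCPTP_idTensor_ptrace3E_eq {ρ : Matrix (R × Q × E) (R × Q × E) ℂ}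
    (hρ : IsState ρ) (h : condMutualInfo ρ = 0) :
    ∃ Φ : Matrix Q Q ℂ →ₗ[ℂ] Matrix (Q × E) (Q × E) ℂ, IsCPTP Φ ∧
      idTensor R Φ (ptrace3E ρ) = ρ := by
  rw [condMutualInfo_eq_sub, sub_eq_zero, eq_comm] at h
  exact ⟨recoveryMap (ptraceRightₗ Q E) (ptraceLeft ρ), isCPTP_recoveryMap isCPTP_ptraceRightₗ
    ⟨posSemidef_ptraceLeft hρ.1, (trace_ptraceLeft ρ).trans hρ.2⟩,
    idTensor_recoveryMap isCPTP_ptraceRightₗ hρ.1 h⟩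

theorem ptrace3E_one_kronecker_conj {A B C : Type*} [Fintype A] [Fintype C]
    (V : Matrix (B × C) A ℂ) (ρ : Matrix (R × A) (R × A) ℂ) :
    ptrace3E (((1 : Matrix R R ℂ) ⊗ₖ V) * ρ * ((1 : Matrix R R ℂ) ⊗ₖ V)ᴴ) =
      idTensor R (ptraceRightₗ B C ∘ₗ conjₗ V) ρ := by
  rw [idTensor_comp, idTensor_conjₗ, idTensor_ptraceRightₗ]

theorem exists_isometry_ptraceRightₗ_comp_conjₗ_eq_id (A : Type*) [Fintype A] [DecidableEq A] :
    ∃ V : Matrix (A × Unit) A ℂ, Vᴴ * V = 1 ∧ ptraceRightₗ A Unit ∘ₗ conjₗ V = LinearMap.id := by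
  refine ⟨(1 : Matrix A A ℂ).submatrix (Equiv.prodPUnit A) id, ?_, ?_⟩
  · rw [conjTranspose_submatrix, submatrix_mul_equiv, conjTranspose_one, Matrix.one_mul,
      submatrix_id_id]
  · ext M : 1
    rw [LinearMap.comp_apply, conjₗ_apply, conjTranspose_submatrix, conjTranspose_one]
    ext i j
    simp [ptraceRightₗ, ptraceRight, mul_apply, one_apply]

end Tripartite

/-- For a tripartite state `ρ_RQE`, the following are equivalent:
(a) every joint system-environment isometric evolution satisfies the quantum
data-processing inequality for the reduced reference-system dynamics;
(b) `I(R;E|Q)_ρ = 0`;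
(c) every joint system-environment isometric evolution yields CPTP reduced dynamics. -/
theorem stmt0 {R Q E : Type} [Fintype R] [DecidableEq R] [Fintype Q] [DecidableEq Q]
    [Fintype E] [DecidableEq E]
    (ρ : Matrix (R × Q × E) (R × Q × E) ℂ) (hρ : IsState ρ) :
    List.TFAE
      [ (∀ (Q' E' : Type) [Fintype Q'] [DecidableEq Q'] [Fintype E'] [DecidableEq E']
          (V : Matrix (Q' × E') (Q × E) ℂ), Vᴴ * V = 1 →
          mutualInfo (ptrace3E
              (((1 : Matrix R R ℂ) ⊗ₖ V) * ρ * ((1 : Matrix R R ℂ) ⊗ₖ V)ᴴ))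
            ≤ mutualInfo (ptrace3E ρ)),
        condMutualInfo ρ = 0,
        (∀ (Q' E' : Type) [Fintype Q'] [DecidableEq Q'] [Fintype E'] [DecidableEq E']
          (V : Matrix (Q' × E') (Q × E) ℂ), Vᴴ * V = 1 →
          ∃ ℰ : Matrix Q Q ℂ →ₗ[ℂ] Matrix Q' Q' ℂ, IsCPTP ℰ ∧
            ptrace3E (((1 : Matrix R R ℂ) ⊗ₖ V) * ρ * ((1 : Matrix R R ℂ) ⊗ₖ V)ᴴ)
              = idTensor R ℰ (ptrace3E ρ)) ] := by
  tfae_have 1 → 2 := by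
    intro h
    obtain ⟨V, hV, hid⟩ := exists_isometry_ptraceRightₗ_comp_conjₗ_eq_id (Q × E)
    have hle := h (Q × E) Unit V hV
    rw [ptrace3E_one_kronecker_conj, hid] at hle
    refine (condMutualInfo_nonneg hρ.1).antisymm' ?_
    rw [condMutualInfo_eq_sub]
    exact sub_nonpos.mpr hle
  tfae_have 2 → 3 := by
    intro h Q' E' _ _ _ _ V hV
    obtain ⟨Φ, hΦ, hΦρ⟩ := exists_isCPTP_idTensor_ptrace3E_eq hρ h
    refine ⟨(ptraceRightₗ Q' E' ∘ₗ conjₗ V) ∘ₗ Φ,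
      (isCPTP_ptraceRightₗ.comp (isCPTP_conjₗ hV)).comp hΦ, ?_⟩
    rw [ptrace3E_one_kronecker_conj, idTensor_comp _ Φ, hΦρ]
  tfae_have 3 → 1 := by
    intro h Q' E' _ _ _ _ V hV
    obtain ⟨Φ, hΦ, hΦρ⟩ := h Q' E' V hV
    rw [hΦρ]
    exact mutualInfo_idTensor_le hΦ (posSemidef_ptrace3E hρ.1)
  tfae_finish
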